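/- arXiv:2210.06214 — 3 statements merged into one kernel-verified Lean document; each statement's English description precedes it below -/
import Mathlib

section
/- Let k and n be positive integers. Suppose there exists an RDS(3, k + 1, n + 1). If there exist an RDSQS(3k + 1) and an RDGDD(3, 4, 3(k + 1)) of type 3^{k+1}, then there exists an RDSQS(3n + 1). -/
open Finset

/-- A parallel class on point set `Y`: a collection of blocks that partitions `Y`. -/
def IsParallelClass (Y : Finset ℕ) (P : Finset (Finset ℕ)) : Prop :=
  (∀ b ∈ P, b ⊆ Y) ∧ ∀ y ∈ Y, ∃! b, b ∈ P ∧ y ∈ b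

/-- A block collection `B` on point set `Y` is resolvable if it can be partitioned
into parallel classes of `Y`. -/
def Resolvable (Y : Finset ℕ) (B : Finset (Finset ℕ)) : Prop :=
  ∃ (r : ℕ) (P : Fin r → Finset (Finset ℕ)),
    (∀ i, IsParallelClass Y (P i)) ∧ (∀ i, P i ⊆ B) ∧ ∀ b ∈ B, ∃! i, b ∈ P i

/-- The blocks of the derived design at a point `x`:
`{B \ {x} : x ∈ B, B ∈ B}`. -/
def derivedBlocks (B : Finset (Finset ℕ)) (x : ℕ) : Finset (Finset ℕ) :=
  (B.filter fun b => x ∈ b).image fun b => b.erase x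

/-- A Steiner system S(t, k, v) on point set `X` with block collection `B`. -/
def IsSteiner (t k v : ℕ) (X : Finset ℕ) (B : Finset (Finset ℕ)) : Prop :=
  X.card = v ∧ (∀ b ∈ B, b ⊆ X ∧ b.card = k) ∧
  ∀ T ⊆ X, T.card = t → ∃! b, b ∈ B ∧ T ⊆ b

/-- An RDS(t, k, v): a Steiner system S(t, k, v) whose derived design at every
point is resolvable. -/
def IsRDS (t k v : ℕ) (X : Finset ℕ) (B : Finset (Finset ℕ)) : Prop :=
  IsSteiner t k v X B ∧ ∀ x ∈ X, Resolvable (X.erase x) (derivedBlocks B x)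

/-- Existence of an RDS(t, k, v). -/
def ExistsRDS (t k v : ℕ) : Prop := ∃ X B, IsRDS t k v X B

/-- Existence of an RDSQS(v), i.e. an RDS(3, 4, v). -/
def ExistsRDSQS (v : ℕ) : Prop := ExistsRDS 3 4 v

/-- A Kirkman triple system KTS(v): a resolvable Steiner triple system. -/
def IsKTS (v : ℕ) (X : Finset ℕ) (B : Finset (Finset ℕ)) : Prop :=
  IsSteiner 2 3 v X B ∧ Resolvable X B

/-- Existence of a large set of Kirkman triple systems LKTS(v): a partition of
all 3-element subsets of a v-element set into v - 2 classes, each a KTS(v). -/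
def ExistsLKTS (v : ℕ) : Prop :=
  ∃ (X : Finset ℕ) (C : Fin (v - 2) → Finset (Finset ℕ)),
    X.card = v ∧ (∀ i, IsKTS v X (C i)) ∧
    (∀ T : Finset ℕ, (T ⊆ X ∧ T.card = 3) ↔ ∃ i, T ∈ C i) ∧
    ∀ (T : Finset ℕ) (i j : Fin (v - 2)), T ∈ C i → T ∈ C j → i = j

/-- A t-wise balanced design S(t, K, v) with block sizes from the set `K`. -/
def IsTBD (t : ℕ) (K : Set ℕ) (v : ℕ) (X : Finset ℕ) (B : Finset (Finset ℕ)) : Prop :=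
  X.card = v ∧ (∀ b ∈ B, b ⊆ X ∧ b.card ∈ K) ∧
  ∀ T ⊆ X, T.card = t → ∃! b, b ∈ B ∧ T ⊆ b

/-- A group divisible design GDD(t, K, g*n) of type g^n: `Gs` is a partition of
`X` into `n` groups of size `g`; blocks have sizes in `K`, meet every group in
at most one point, and every t-subset of `X` meeting every group in at most one
point lies in exactly one block. -/
def IsGDD (t : ℕ) (K : Set ℕ) (g n : ℕ) (X : Finset ℕ)
    (Gs Bs : Finset (Finset ℕ)) : Prop :=
  X.card = g * n ∧ Gs.card = n ∧
  (∀ G ∈ Gs, G ⊆ X ∧ G.card = g) ∧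
  (∀ x ∈ X, ∃! G, G ∈ Gs ∧ x ∈ G) ∧
  (∀ b ∈ Bs, b ⊆ X ∧ b.card ∈ K) ∧
  (∀ b ∈ Bs, ∀ G ∈ Gs, (b ∩ G).card ≤ 1) ∧
  ∀ T ⊆ X, T.card = t → (∀ G ∈ Gs, (T ∩ G).card ≤ 1) → ∃! b, b ∈ Bs ∧ T ⊆ b

/-- An RDGDD(t, K, g*n) of type g^n: a GDD whose derived design at every point
(on point set `X \ G`, where `G` is the group of the point) is resolvable. -/
def IsRDGDD (t : ℕ) (K : Set ℕ) (g n : ℕ) (X : Finset ℕ)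
    (Gs Bs : Finset (Finset ℕ)) : Prop :=
  IsGDD t K g n X Gs Bs ∧
  ∀ x ∈ X, ∀ G ∈ Gs, x ∈ G → Resolvable (X \ G) (derivedBlocks Bs x)

/-- An RDSQS*(v): an SQS(v) with v ≡ 1 (mod 3) such that, for every point `x`,
the derived blocks at `x` contain a parallel class `P'` (enumerated by `Bk`);
the multiset consisting of each triple of `P'` three times and each remaining
derived triple twice can be partitioned into (v-1) parallel classes
`P k l` (k ranging over Fin ((v-1)/3), l over Fin 3); and for each `k` the three
parallel classes `P k l` share the common triple `Bk k`. -/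
def IsRDSQSstar (v : ℕ) (X : Finset ℕ) (B : Finset (Finset ℕ)) : Prop :=
  IsSteiner 3 4 v X B ∧ v % 3 = 1 ∧
  ∀ x ∈ X, ∃ (P' : Finset (Finset ℕ)) (Bk : Fin ((v - 1) / 3) → Finset ℕ)
    (P : Fin ((v - 1) / 3) → Fin 3 → Finset (Finset ℕ)),
    P' ⊆ derivedBlocks B x ∧
    IsParallelClass (X.erase x) P' ∧
    (∀ k, Bk k ∈ P') ∧
    (∀ b ∈ P', ∃ k, Bk k = b) ∧
    Function.Injective Bk ∧
    (∀ k l, IsParallelClass (X.erase x) (P k l)) ∧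
    ((∑ k, ∑ l, (P k l).val) =
        3 • P'.val + 2 • ((derivedBlocks B x) \ P').val) ∧
    ∀ k l, Bk k ∈ P k l

/-!
Adjoin a point `∞` to obtain the points `{∞} ∪ (X₀ \ {∞}) × ι` over the point set `X₀ ∋ ∞` of the
RDS(3, k + 1, n + 1), so that `{a} × ι` is the group of `a ≠ ∞`. Every `{∞} ∪ {a} × ι` is a block.
Over a base block missing `∞` place the RDGDD; over a base block containing `∞` place the RDSQS in
such a way that one of its parallel classes at `∞` consists of the group blocks, and remove these.
A triple inside no group block spans exactly three base points (`∞` being added when two of its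
points share a group), hence lies over a unique base block.

Counting the blocks through two points shows that each RDGDD resolution has a fixed number `r` of
classes and each RDSQS resolution has `r + 1`. Set aside, at each point `p`, the RDSQS class
containing the group block through `p`. The remaining classes are matched up along the parallel
classes of the base design at the image of `p`, and the classes set aside combine with the group
blocks through `p` into one more parallel class.
-/

section Designs

variable {α β γ δ κ μ : Type*} {B : Set (Finset α)} {x : α} {Y : κ → Set α}
  {P : κ → Set (Finset α)}

/-- A resolution of the derived design of `B` at `x`: the blocks through `x` are distributed over
the classes `P i`, and the blocks of `P i`, once `x` is removed, partition the point set `Y i`.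
Ordinary resolutions have a constant `Y`; letting `Y` depend on the class allows for holes. -/
structure IsResolutionAt (B : Set (Finset α)) (x : α) (Y : κ → Set α)
    (P : κ → Set (Finset α)) : Prop where
  mem_block : ∀ ⦃i s⦄, s ∈ P i → s ∈ B ∧ x ∈ s
  mem_points : ∀ ⦃i s⦄, s ∈ P i → ∀ y ∈ s, y ≠ x → y ∈ Y i
  existsUnique_class : ∀ s ∈ B, x ∈ s → ∃! i, s ∈ P i
  existsUnique_block : ∀ i, ∀ y ∈ Y i, ∃! s, s ∈ P i ∧ y ∈ s

theorem IsResolutionAt.reindex (h : IsResolutionAt B x Y P) (e : μ ≃ κ) :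
    IsResolutionAt B x (Y ∘ e) (P ∘ e) where
  mem_block _ _ hs := h.mem_block hs
  mem_points _ _ hs := h.mem_points hs
  existsUnique_class s hs hx := by
    simpa only [e.existsUnique_congr_left, Function.comp_apply, e.apply_symm_apply] using
      h.existsUnique_class s hs hx
  existsUnique_block i := h.existsUnique_block (e i)

theorem IsResolutionAt.diff (h : IsResolutionAt B x Y P) (G : Set (Finset α)) :
    IsResolutionAt (B \ G) x (fun i => {y ∈ Y i | ∀ s ∈ P i, y ∈ s → s ∉ G})
      (fun i => P i \ G) where
  mem_block _ _ hs := ⟨⟨(h.mem_block hs.1).1, hs.2⟩, (h.mem_block hs.1).2⟩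
  mem_points i s hs y hy hne := by
    have hyY := h.mem_points hs.1 y hy hne
    refine ⟨hyY, fun t ht hyt => ?_⟩
    rw [(h.existsUnique_block i y hyY).unique ⟨ht, hyt⟩ ⟨hs.1, hy⟩]
    exact hs.2
  existsUnique_class s hs hx := by
    simpa only [Set.mem_sdiff, hs.2, not_false_eq_true, and_true] using
      h.existsUnique_class s hs.1 hx
  existsUnique_block i y hy := by
    obtain ⟨s, hs, hunique⟩ := h.existsUnique_block i y hy.1
    exact ⟨s, ⟨⟨hs.1, hy.2 s hs.1 hs.2⟩, hs.2⟩, fun t ht => hunique t ⟨ht.1.1, ht.2⟩⟩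

theorem IsResolutionAt.addEmptyClass (h : IsResolutionAt B x Y P) :
    IsResolutionAt B x (fun m : Option κ => m.elim ∅ Y) (fun m => m.elim ∅ P) where
  mem_block m _ hs := by
    cases m with
    | none => exact hs.elim
    | some i => exact h.mem_block hs
  mem_points m _ hs := by
    cases m with
    | none => exact hs.elim
    | some i => exact h.mem_points hs
  existsUnique_class s hs hx := by
    obtain ⟨i, hi, hunique⟩ := h.existsUnique_class s hs hx
    refine ⟨some i, hi, ?_⟩
    rintro (- | j) hj
    exacts [hj.elim, congrArg some (hunique j hj)]
  existsUnique_block m := by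
    cases m with
    | none => exact fun y hy => hy.elim
    | some i => exact h.existsUnique_block i

theorem IsResolutionAt.map (h : IsResolutionAt B x Y P) (e : α ≃ β) :
    IsResolutionAt (e.symm.finsetCongr ⁻¹' B) (e x) (fun i => e.symm ⁻¹' Y i)
      (fun i => e.symm.finsetCongr ⁻¹' P i) where
  mem_block _ _ hs := by simpa [Finset.mem_map_equiv] using h.mem_block hs
  mem_points i s hs y hy hne :=
    h.mem_points hs (e.symm y) (by simpa using hy) (by simpa [e.symm_apply_eq] using hne)
  existsUnique_class s hs hx := h.existsUnique_class _ hs (by simpa using hx)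
  existsUnique_block i y hy := by
    simpa [e.finsetCongr.existsUnique_congr_left, Finset.mem_map_equiv] using
      h.existsUnique_block i (e.symm y) hy

/-- The derived design of `B` at `x` is resolvable on the point set `Y`, with classes indexed by
`κ`. -/
def ResolvableAt (κ : Type*) (B : Set (Finset α)) (x : α) (Y : Set α) : Prop :=
  ∃ P : κ → Set (Finset α), IsResolutionAt B x (fun _ => Y) P

theorem ResolvableAt.exists_fin [Finite κ] {Y : Set α} (h : ResolvableAt κ B x Y) :
    ∃ r : ℕ, ResolvableAt (Fin r) B x Y :=
  ⟨Nat.card κ, _, h.choose_spec.reindex (Finite.equivFin κ).symm⟩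

theorem ResolvableAt.exists_mem_none {Y : Set α} (h : ResolvableAt (Option κ) B x Y)
    {s : Finset α} (hs : s ∈ B) (hx : x ∈ s) :
    ∃ P : Option κ → Set (Finset α), IsResolutionAt B x (fun _ => Y) P ∧ s ∈ P none := by
  classical
  obtain ⟨P, hP⟩ := h
  obtain ⟨i, hi, -⟩ := hP.existsUnique_class s hs hx
  refine ⟨_, hP.reindex (Equiv.swap none i), ?_⟩
  rwa [Function.comp_apply, Equiv.swap_apply_left]

/-- A group divisible `t`-design with blocks of size `k` on the point set `X`, the groups being the
fibres of `g` in `X`. A Steiner system is the case of singleton groups, `g = id`. -/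
structure IsGroupDesign (t k : ℕ) (X : Finset α) (g : α → γ) (B : Set (Finset α)) : Prop where
  subset : ∀ s ∈ B, s ⊆ X
  card_eq : ∀ s ∈ B, #s = k
  injOn : ∀ s ∈ B, Set.InjOn g s
  existsUnique_block : ∀ T ⊆ X, #T = t → Set.InjOn g T → ∃! s, s ∈ B ∧ T ⊆ s

/-- A group divisible `t`-design whose derived design at each point is resolvable. -/
structure IsResolvableDesign (t k : ℕ) (X : Finset α) (g : α → γ) (B : Set (Finset α)) : Prop
    extends IsGroupDesign t k X g B where
  resolvableAt : ∀ x ∈ X, ∃ r : ℕ, ResolvableAt (Fin r) B x {y | y ∈ X ∧ g y ≠ g x}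

variable {t k : ℕ} {X : Finset α} {Z : Finset β} {g : α → γ} {l : β → δ}

theorem IsGroupDesign.map (h : IsGroupDesign t k X g B) (e : α ≃ β) (hZ : ∀ x, e x ∈ Z ↔ x ∈ X)
    (hl : ∀ x ∈ X, ∀ y ∈ X, l (e x) = l (e y) ↔ g x = g y) :
    IsGroupDesign t k Z l (e.symm.finsetCongr ⁻¹' B) where
  subset s hs y hy := by
    simpa using (hZ _).2 (h.subset _ hs (by simpa using hy : e.symm y ∈ _))
  card_eq s hs := by simpa using h.card_eq _ hs
  injOn s hs y hy z hz hyz := by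
    have hy' : e.symm y ∈ e.symm.finsetCongr s := by simpa using hy
    have hz' : e.symm z ∈ e.symm.finsetCongr s := by simpa using hz
    refine e.symm.injective (h.injOn _ hs hy' hz' ?_)
    rw [← hl _ (h.subset _ hs hy') _ (h.subset _ hs hz')]
    simpa using hyz
  existsUnique_block T hTZ hT hinj := by
    have hTX : T.map e.symm.toEmbedding ⊆ X := fun x hx =>
      (hZ x).1 (hTZ (by simpa using hx))
    have hunique := h.existsUnique_block (T.map e.symm.toEmbedding) hTX (by simpa using hT)
      fun x hx y hy hxy => e.injective <| hinj (by simpa using hx) (by simpa using hy)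
        ((hl x (hTX hx) y (hTX hy)).2 hxy)
    simpa [e.finsetCongr.existsUnique_congr_left, Finset.map_subset_map] using hunique

theorem IsResolvableDesign.map (h : IsResolvableDesign t k X g B) (e : α ≃ β)
    (hZ : ∀ x, e x ∈ Z ↔ x ∈ X) (hl : ∀ x ∈ X, ∀ y ∈ X, l (e x) = l (e y) ↔ g x = g y) :
    IsResolvableDesign t k Z l (e.symm.finsetCongr ⁻¹' B) where
  toIsGroupDesign := h.toIsGroupDesign.map e hZ hl
  resolvableAt := by
    refine e.forall_congr_right.1 fun x hx => ?_
    obtain ⟨r, P, hP⟩ := h.resolvableAt x ((hZ x).1 hx)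
    have hY : e.symm ⁻¹' {y | y ∈ X ∧ g y ≠ g x} = {y | y ∈ Z ∧ l y ≠ l (e x)} := by
      ext y
      obtain ⟨y, rfl⟩ := e.surjective y
      simp only [Set.mem_preimage, Set.mem_ofPred_eq, e.symm_apply_apply, hZ]
      exact and_congr_right fun hy => not_congr (hl y hy x ((hZ x).1 hx)).symm
    exact ⟨r, _, hY ▸ hP.map e⟩

theorem IsGroupDesign.existsUnique_block_triple (h : IsGroupDesign 3 k X g B) {y z : α}
    (hx : x ∈ X) (hy : y ∈ X) (hz : z ∈ X) (hyx : g y ≠ g x) (hzx : g z ≠ g x)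
    (hzy : g z ≠ g y) : ∃! s, s ∈ B ∧ x ∈ s ∧ y ∈ s ∧ z ∈ s := by
  classical
  have hcard : #{x, y, z} = 3 :=
    card_eq_three.2 ⟨x, y, z, fun h => hyx (h ▸ rfl), fun h => hzx (h ▸ rfl),
      fun h => hzy (h ▸ rfl), rfl⟩
  have hinj : Set.InjOn g ({x, y, z} : Finset α) := by
    simp [Set.InjOn, hyx, hyx.symm, hzx, hzx.symm, hzy, hzy.symm]
  simpa [insert_subset_iff] using h.existsUnique_block {x, y, z}
    (by simp [insert_subset_iff, hx, hy, hz]) hcard hinj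

theorem IsGroupDesign.existsUnique_class_triple (h : IsGroupDesign 3 k X g B)
    (hP : IsResolutionAt B x Y P) {y z : α} (hx : x ∈ X) (hy : y ∈ X) (hz : z ∈ X)
    (hyx : g y ≠ g x) (hzx : g z ≠ g x) (hzy : g z ≠ g y) :
    ∃! i, ∃ s ∈ P i, y ∈ s ∧ z ∈ s := by
  obtain ⟨s, ⟨hsB, hxs, hys, hzs⟩, hs⟩ := h.existsUnique_block_triple hx hy hz hyx hzx hzy
  obtain ⟨i, hsi, hi⟩ := hP.existsUnique_class s hsB hxs
  refine ⟨i, ⟨s, hsi, hys, hzs⟩, ?_⟩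
  rintro j ⟨t, htj, hyt, hzt⟩
  obtain rfl := hs t ⟨(hP.mem_block htj).1, (hP.mem_block htj).2, hyt, hzt⟩
  exact hi j htj

/-- Every class of a resolution at `x` has one block through `x` and `y`; outside of `x` and `y`
these blocks partition the points that form a triple with `x` and `y`. -/
theorem IsGroupDesign.mul_card_class_eq [Fintype κ] [DecidableEq γ]
    (h : IsGroupDesign 3 k X g B) {y : α} (hx : x ∈ X) (hy : y ∈ X) (hyx : g y ≠ g x)
    (hres : ResolvableAt κ B x {y | y ∈ X ∧ g y ≠ g x}) :
    (k - 2) * Fintype.card κ = #{z ∈ X | g z ≠ g x ∧ g z ≠ g y} := by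
  classical
  obtain ⟨P, hP⟩ := hres
  choose s hs hunique using fun i => hP.existsUnique_block i y ⟨hy, hyx⟩
  have hsB i : s i ∈ B ∧ x ∈ s i := hP.mem_block (hs i).1
  have hne : x ≠ y := fun h => hyx (h ▸ rfl)
  have hpair i : {x, y} ⊆ s i := by simp [insert_subset_iff, (hsB i).2, (hs i).2]
  have hmem i z (hz : z ∈ s i \ {x, y}) : z ∈ X ∧ g z ≠ g x ∧ g z ≠ g y := by
    simp only [mem_sdiff, mem_insert, mem_singleton, not_or] at hz
    have hinj := h.injOn _ (hsB i).1
    exact ⟨h.subset _ (hsB i).1 hz.1, hinj.ne hz.1 (hsB i).2 hz.2.1, hinj.ne hz.1 (hs i).2 hz.2.2⟩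
  have hclass z (hz : z ∈ X ∧ g z ≠ g x ∧ g z ≠ g y) : ∃! i, z ∈ s i := by
    obtain ⟨i, ⟨t, ht, hyt, hzt⟩, hi⟩ :=
      h.existsUnique_class_triple hP hx hy hz.1 hyx hz.2.1 hz.2.2
    exact ⟨i, (hunique i t ⟨ht, hyt⟩ ▸ hzt : z ∈ s i), fun j hj =>
      hi j ⟨s j, (hs j).1, (hs j).2, hj⟩⟩
  have hunion : {z ∈ X | g z ≠ g x ∧ g z ≠ g y} = univ.biUnion fun i => s i \ {x, y} := by
    ext z
    simp only [mem_filter, mem_biUnion, mem_univ, true_and]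
    refine ⟨fun hz => ?_, fun ⟨i, hz⟩ => hmem i z hz⟩
    obtain ⟨i, hi, -⟩ := hclass z hz
    refine ⟨i, mem_sdiff.2 ⟨hi, ?_⟩⟩
    rw [mem_insert, mem_singleton]
    rintro (rfl | rfl)
    exacts [hz.2.1 rfl, hz.2.2 rfl]
  have hdisjoint : ((univ : Finset κ) : Set κ).PairwiseDisjoint fun i => s i \ {x, y} :=
    fun i _ j _ hij => disjoint_left.2 fun z hzi hzj => hij <|
      (hclass z (hmem i z hzi)).unique (mem_sdiff.1 hzi).1 (mem_sdiff.1 hzj).1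
  rw [hunion, card_biUnion hdisjoint]
  simp [card_sdiff_of_subset (hpair _), h.card_eq _ (hsB _).1, card_pair hne, mul_comm]

theorem IsResolvableDesign.resolvableAt_fin [DecidableEq γ] (h : IsResolvableDesign 3 k X g B)
    (hk : 2 < k) {y : α} (hx : x ∈ X) (hy : y ∈ X) (hyx : g y ≠ g x) {m : ℕ}
    (hm : (k - 2) * m = #{z ∈ X | g z ≠ g x ∧ g z ≠ g y}) :
    ResolvableAt (Fin m) B x {y | y ∈ X ∧ g y ≠ g x} := by
  obtain ⟨r, hr⟩ := h.resolvableAt x hx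
  have hrm : (k - 2) * r = (k - 2) * m := by
    simpa only [Fintype.card_fin, ← hm] using h.mul_card_class_eq hx hy hyx hr
  rwa [← Nat.eq_of_mul_eq_mul_left (Nat.sub_pos_of_lt hk) hrm]

theorem card_filter_ne_and_ne [DecidableEq α] {y : α} (hx : x ∈ X) (hy : y ∈ X) (hyx : y ≠ x) :
    #{z ∈ X | z ≠ x ∧ z ≠ y} = #X - 2 := by
  have : {z ∈ X | z ≠ x ∧ z ≠ y} = (X.erase x).erase y := by
    ext z
    simp only [mem_filter, mem_erase]
    tauto
  rw [this, card_erase_of_mem (mem_erase.2 ⟨hyx, hy⟩), card_erase_of_mem hx, Nat.sub_sub]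

theorem IsResolvableDesign.exists_mul_eq_card_sub_two (h : IsResolvableDesign 3 k X id B)
    (hX : 1 < #X) : ∃ r, (k - 2) * r = #X - 2 := by
  classical
  obtain ⟨x, hx, y, hy, hxy⟩ := one_lt_card.1 hX
  obtain ⟨r, hr⟩ := h.resolvableAt x hx
  have hcard := h.mul_card_class_eq hx hy hxy.symm hr
  rw [Fintype.card_fin] at hcard
  exact ⟨r, hcard.trans (card_filter_ne_and_ne hx hy hxy.symm)⟩

theorem IsResolvableDesign.resolvableAt_option (h : IsResolvableDesign 3 k X id B) (hk : 2 < k)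
    (hX : 1 < #X) (hx : x ∈ X) {r : ℕ} (hr : (k - 2) * (r + 1) = #X - 2) :
    ResolvableAt (Option (Fin r)) B x {y | y ∈ X ∧ y ≠ x} := by
  classical
  obtain ⟨y, hy, hyx⟩ := exists_mem_ne hX x
  obtain ⟨P, hP⟩ := h.resolvableAt_fin hk hx hy hyx
    (hr.trans (card_filter_ne_and_ne hx hy hyx).symm)
  exact ⟨_, hP.reindex (finSuccEquiv r).symm⟩

theorem IsResolvableDesign.exists_none_mem [Countable α] [Infinite α]
    (h : IsResolvableDesign t k X id B) (hX : X.Nonempty) :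
    ∃ (Z : Finset (Option α)) (C : Set (Finset (Option α))),
      none ∈ Z ∧ #Z = #X ∧ IsResolvableDesign t k Z id C := by
  classical
  obtain ⟨x, hx⟩ := hX
  obtain ⟨e⟩ : Nonempty (α ≃ Option α) := nonempty_equiv_of_countable
  let e' : α ≃ Option α := e.trans (Equiv.swap (e x) none)
  have hex : e' x = none := by simp [e']
  exact ⟨X.map e'.toEmbedding, _, hex ▸ mem_map_of_mem _ hx, card_map _,
    h.map e' (fun x => by simp) fun x _ y _ => e'.apply_eq_iff_eq⟩

end Designs

section Bridges

variable {x : ℕ} {X Y : Finset ℕ} {B : Finset (Finset ℕ)}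

theorem Resolvable.resolvableAt (h : Resolvable Y (derivedBlocks B x)) (hx : x ∉ Y) :
    ∃ r : ℕ, ResolvableAt (Fin r) (B : Set (Finset ℕ)) x Y := by
  obtain ⟨r, P, hP, hPB, hunique⟩ := h
  refine ⟨r, fun i => {s | s ∈ B ∧ x ∈ s ∧ s.erase x ∈ P i}, fun i s hs => ⟨hs.1, hs.2.1⟩,
    fun i s hs y hy hne => (hP i).1 _ hs.2.2 (mem_erase.2 ⟨hne, hy⟩), fun s hs hxs => ?_,
    fun i y hy => ?_⟩
  · have hmem : s.erase x ∈ derivedBlocks B x := mem_image_of_mem _ (mem_filter.2 ⟨hs, hxs⟩)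
    simpa [mem_coe.1 hs, hxs] using hunique _ hmem
  · obtain ⟨d, ⟨hd, hyd⟩, hd_unique⟩ := (hP i).2 y hy
    obtain ⟨s, hs, rfl⟩ := mem_image.1 (hPB i hd)
    obtain ⟨hsB, hxs⟩ := mem_filter.1 hs
    refine ⟨s, ⟨⟨hsB, hxs, hd⟩, (mem_erase.1 hyd).2⟩, fun t ⟨⟨_, hxt, ht⟩, hyt⟩ => ?_⟩
    exact erase_injOn' x hxt hxs
      (hd_unique _ ⟨ht, mem_erase.2 ⟨ne_of_mem_of_not_mem hy hx, hyt⟩⟩)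

open Classical in
theorem ResolvableAt.resolvable {r : ℕ}
    (h : ResolvableAt (Fin r) (B : Set (Finset ℕ)) x Y) (hx : x ∉ Y) :
    Resolvable Y (derivedBlocks B x) := by
  obtain ⟨P, hP⟩ := h
  have hclass i d :
      d ∈ ({s ∈ B | s ∈ P i}.image fun s => s.erase x) ↔ x ∉ d ∧ insert x d ∈ P i := by
    simp only [mem_image, mem_filter]
    constructor
    · rintro ⟨s, ⟨-, hs⟩, rfl⟩
      simpa [insert_erase (hP.mem_block hs).2] using hs
    · exact fun ⟨hxd, hd⟩ => ⟨_, ⟨(hP.mem_block hd).1, hd⟩, erase_insert hxd⟩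
  refine ⟨r, fun i => {s ∈ B | s ∈ P i}.image fun s => s.erase x, fun i => ⟨fun d hd y hy => ?_,
    fun y hy => ?_⟩, fun i => ?_, fun d hd => ?_⟩
  · rw [hclass] at hd
    exact hP.mem_points hd.2 y (mem_insert_of_mem hy) (ne_of_mem_of_not_mem hy hd.1)
  · obtain ⟨s, ⟨hs, hys⟩, hs_unique⟩ := hP.existsUnique_block i y hy
    have hyx := ne_of_mem_of_not_mem hy hx
    refine ⟨s.erase x, ⟨?_, mem_erase.2 ⟨hyx, hys⟩⟩, fun d ⟨hd, hyd⟩ => ?_⟩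
    · simpa [hclass, insert_erase (hP.mem_block hs).2] using hs
    · rw [hclass] at hd
      rw [← hs_unique _ ⟨hd.2, mem_insert_of_mem hyd⟩, erase_insert hd.1]
  · exact image_subset_image fun s hs => mem_filter.2
      ⟨(mem_filter.1 hs).1, (hP.mem_block (mem_filter.1 hs).2).2⟩
  · obtain ⟨s, hs, rfl⟩ := mem_image.1 hd
    obtain ⟨hsB, hxs⟩ := mem_filter.1 hs
    simpa only [hclass, notMem_erase, not_false_eq_true, true_and, insert_erase hxs] using
      hP.existsUnique_class s hsB hxs

theorem isRDS_iff {t k v : ℕ} : IsRDS t k v X B ↔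
    #X = v ∧ IsResolvableDesign t k X id (B : Set (Finset ℕ)) := by
  have hY x : ((X.erase x : Finset ℕ) : Set ℕ) = {y | y ∈ X ∧ id y ≠ id x} := by
    ext y; simp [and_comm]
  constructor
  · rintro ⟨⟨hv, hB, hT⟩, hres⟩
    refine ⟨hv, ⟨fun s hs => (hB s hs).1, fun s hs => (hB s hs).2, fun s _ => Set.injOn_id _,
      fun T hTX hTt _ => hT T hTX hTt⟩, fun x hx => ?_⟩
    exact hY x ▸ (hres x hx).resolvableAt (notMem_erase x X)
  · rintro ⟨hv, hB⟩
    refine ⟨⟨hv, fun s hs => ⟨hB.subset s hs, hB.card_eq s hs⟩,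
      fun T hTX hTt => hB.existsUnique_block T hTX hTt (Set.injOn_id _)⟩, fun x hx => ?_⟩
    obtain ⟨r, hr⟩ := hB.resolvableAt x hx
    exact ResolvableAt.resolvable (hY x ▸ hr) (notMem_erase x X)

theorem IsRDGDD.exists_isResolvableDesign {t q k n : ℕ} {Gs : Finset (Finset ℕ)}
    (h : IsRDGDD t {k} q n X Gs B) : ∃ g : ℕ → Finset ℕ,
      IsResolvableDesign t k X g (B : Set (Finset ℕ)) ∧ ∀ x ∈ X, #{y ∈ X | g y = g x} = q := by
  obtain ⟨⟨-, -, hGs, hunique, hB, hBG, hT⟩, hres⟩ := h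
  choose! g hg hg_unique using hunique
  have hmem {x} (hx : x ∈ X) {G} (hG : G ∈ Gs) : x ∈ G ↔ g x = G :=
    ⟨fun h => (hg_unique x hx G ⟨hG, h⟩).symm, fun h => h ▸ (hg x hx).2⟩
  have hgroup x (hx : x ∈ X) : {y ∈ X | g y = g x} = g x := by
    ext y
    rw [mem_filter]
    exact ⟨fun ⟨hy, hyx⟩ => (hmem hy (hg x hx).1).2 hyx, fun hy =>
      have hyX := (hGs _ (hg x hx).1).1 hy
      ⟨hyX, (hmem hyX (hg x hx).1).1 hy⟩⟩
  have hinj {s} (hs : s ⊆ X) : Set.InjOn g s ↔ ∀ G ∈ Gs, #(s ∩ G) ≤ 1 := by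
    simp only [card_le_one, mem_inter]
    constructor
    · rintro hs_inj G hG x ⟨hx, hxG⟩ y ⟨hy, hyG⟩
      exact hs_inj hx hy (((hmem (hs hx) hG).1 hxG).trans ((hmem (hs hy) hG).1 hyG).symm)
    · intro hG x hx y hy hxy
      exact hG (g x) (hg x (hs hx)).1 x ⟨hx, (hg x (hs hx)).2⟩ y ⟨hy, hxy ▸ (hg y (hs hy)).2⟩
  refine ⟨g, ⟨⟨fun s hs => (hB s hs).1, fun s hs => (hB s hs).2, fun s hs =>
    (hinj (hB s hs).1).2 (hBG s hs), fun T hTX hTt hTg => hT T hTX hTt ((hinj hTX).1 hTg)⟩,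
    fun x hx => ?_⟩, fun x hx => ?_⟩
  · have hY : ((X \ g x : Finset ℕ) : Set ℕ) = {y | y ∈ X ∧ g y ≠ g x} := by
      ext y
      simp only [coe_sdiff, Set.mem_sdiff, mem_coe, Set.mem_ofPred_eq]
      exact and_congr_right fun hy => not_congr (hmem hy (hg x hx).1)
    exact hY ▸ (hres x hx (g x) (hg x hx).1 (hg x hx).2).resolvableAt
      fun hmem => (mem_sdiff.1 hmem).2 (hg x hx).2
  · rw [hgroup x hx, (hGs _ (hg x hx).1).2]

theorem existsRDS_of_isResolvableDesign {α : Type*} [Countable α] [Infinite α] {t k : ℕ}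
    {X : Finset α} {B : Set (Finset α)} (h : IsResolvableDesign t k X id B) :
    ExistsRDS t k #X := by
  obtain ⟨e⟩ := nonempty_equiv_of_countable (α := α) (β := ℕ)
  have hmap := h.map e (Z := X.map e.toEmbedding) (l := id) (by simp) (by simp)
  have hfin : (e.symm.finsetCongr ⁻¹' B).Finite :=
    (finite_toSet (X.map e.toEmbedding).powerset).subset fun s hs =>
      mem_powerset.2 (hmap.subset s hs)
  refine ⟨X.map e.toEmbedding, hfin.toFinset, isRDS_iff.2 ⟨card_map _, ?_⟩⟩
  rwa [hfin.coe_toFinset]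

end Bridges

section GroupBijection

variable {α β γ δ : Type*} {X : Finset α} {Y : Finset β}

theorem exists_equiv_extending [Countable α] [Infinite α] [Countable β] [Infinite β]
    (e₀ : X ≃ Y) : ∃ e : α ≃ β, (∀ x, e x ∈ Y ↔ x ∈ X) ∧ ∀ x : X, e x = e₀ x := by
  obtain ⟨e, he⟩ := Cardinal.extend_function_of_lt (s := (X : Set α))
    (e₀.toEmbedding.trans (Function.Embedding.subtype _))
    ((Cardinal.lt_aleph0_of_finite _).trans_le (Cardinal.aleph0_le_mk α))
    nonempty_equiv_of_countable
  have he' (x : X) : e x = e₀ x := he x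
  refine ⟨e, fun x => ⟨fun hx => ?_, fun hx => he' ⟨x, hx⟩ ▸ (e₀ ⟨x, hx⟩).2⟩, he'⟩
  have : e (e₀.symm ⟨e x, hx⟩) = e x := by rw [he', e₀.apply_symm_apply]
  exact e.injective this ▸ (e₀.symm ⟨e x, hx⟩).2

theorem exists_equiv_apply_eq (e : α ≃ β) (he : ∀ x, e x ∈ Y ↔ x ∈ X) {x₀ : α} {y₀ : β}
    (hx₀ : x₀ ∉ X) (hy₀ : y₀ ∉ Y) :
    ∃ e' : α ≃ β, e' x₀ = y₀ ∧ (∀ x, e' x ∈ Y ↔ x ∈ X) ∧ ∀ x ∈ X, e' x = e x := by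
  classical
  have hfix {y} (hy : y ∈ Y) : Equiv.swap (e x₀) y₀ y = y :=
    Equiv.swap_apply_of_ne_of_ne (fun h => hx₀ ((he x₀).1 (h ▸ hy))) (ne_of_mem_of_not_mem hy hy₀)
  refine ⟨e.trans (Equiv.swap (e x₀) y₀), by simp, fun x => ?_, fun x hx => hfix ((he x).2 hx)⟩
  rw [Equiv.trans_apply, ← he x]
  refine ⟨fun hx => ?_, fun hx => (hfix hx).symm ▸ hx⟩
  rwa [← hfix hx, Equiv.swap_apply_self] at hx

theorem card_image_mul_of_card_fiber_eq [DecidableEq γ] {g : α → γ} {q : ℕ}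
    (hg : ∀ x ∈ X, #{y ∈ X | g y = g x} = q) : #(X.image g) * q = #X := by
  rw [card_eq_sum_card_image g X, sum_const_nat]
  simpa using hg

theorem card_subtype_fiber [DecidableEq γ] (g : α → γ) (c : γ) :
    Fintype.card {x : X // g x = c} = #{x ∈ X | g x = c} := by
  rw [Fintype.card_subtype, univ_eq_attach, filter_attach (fun x => g x = c), card_map,
    card_attach]

/-- The ambient types are taken countably infinite so that a bijection `X ≃ Y` extends to an
equivalence between them. -/
theorem exists_equiv_of_card_fiber_eq [Countable α] [Infinite α] [Countable β] [Infinite β]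
    [DecidableEq γ] [DecidableEq δ] {g : α → γ} {l : β → δ} {q : ℕ} (hq : 0 < q) (hXY : #X = #Y)
    (hg : ∀ x ∈ X, #{y ∈ X | g y = g x} = q) (hl : ∀ x ∈ Y, #{y ∈ Y | l y = l x} = q) :
    ∃ e : α ≃ β, (∀ x, e x ∈ Y ↔ x ∈ X) ∧
      ∀ x ∈ X, ∀ y ∈ X, l (e x) = l (e y) ↔ g x = g y := by
  have hgroups : #(X.image g) = #(Y.image l) := Nat.eq_of_mul_eq_mul_right hq <| by
    rw [card_image_mul_of_card_fiber_eq hg, card_image_mul_of_card_fiber_eq hl, hXY]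
  let φ : X.image g ≃ Y.image l := equivOfCardEq hgroups
  let gX (x : X) : Y.image l := φ ⟨g x, mem_image_of_mem g x.2⟩
  let lY (y : Y) : Y.image l := ⟨l y, mem_image_of_mem l y.2⟩
  have hfiber (c : Y.image l) : Fintype.card {x // gX x = c} = Fintype.card {y // lY y = c} := by
    obtain ⟨x, hx, hxc⟩ := mem_image.1 (φ.symm c).2
    obtain ⟨y, hy, hyc⟩ := mem_image.1 c.2
    have hgX (z : X) : gX z = c ↔ g z = g x := by
      rw [← φ.eq_symm_apply, Subtype.ext_iff, hxc]
    have hlY (z : Y) : lY z = c ↔ l z = l y := by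
      rw [Subtype.ext_iff, hyc]
    simp only [hgX, hlY, card_subtype_fiber, hg x hx, hl y hy]
  let e₀ : X ≃ Y := Equiv.ofFiberEquiv fun c => Fintype.equivOfCardEq (hfiber c)
  have he₀ (x : X) : lY (e₀ x) = gX x := Equiv.ofFiberEquiv_map _ x
  obtain ⟨e, heY, he⟩ := exists_equiv_extending e₀
  refine ⟨e, heY, fun x hx y hy => ?_⟩
  rw [he ⟨x, hx⟩, he ⟨y, hy⟩]
  have : lY (e₀ ⟨x, hx⟩) = lY (e₀ ⟨y, hy⟩) ↔ gX ⟨x, hx⟩ = gX ⟨y, hy⟩ := by rw [he₀, he₀]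
  simpa [lY, gX] using this

end GroupBijection

namespace Inflation

section Points

variable {α ι : Type*} {p y : Option (α × ι)} {S T : Finset (Option (α × ι))} {a : α}
  {b : Finset (Option α)}

/-- The projection of the inflated points onto the base points. Each base point `some a` is
inflated to the group `{a} × ι`, whereas the point at infinity `none` is kept. -/
def base : Option (α × ι) → Option α := Option.map Prod.fst

@[simp] theorem base_none : base (none : Option (α × ι)) = none := rfl

@[simp] theorem base_some (a : α) (i : ι) : base (some (a, i)) = some a := rfl

theorem base_eq_none_iff : base p = none ↔ p = none := Option.map_eq_none_iff

theorem base_ne_none_of_base_eq (hne : y ≠ p) (h : base y = base p) : base p ≠ none := by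
  intro hp
  exact hne ((base_eq_none_iff.1 (h.trans hp)).trans (base_eq_none_iff.1 hp).symm)

/-- `S` consists of points of a single group and possibly the point at infinity. -/
def InGroup (S : Finset (Option (α × ι))) : Prop :=
  ∀ p ∈ S, ∀ y ∈ S, base p = none ∨ base y = none ∨ base p = base y

theorem inGroup_pair_iff [DecidableEq α] [DecidableEq ι] :
    InGroup {p, y} ↔ base p = none ∨ base y = none ∨ base p = base y := by
  simp only [InGroup, mem_insert, mem_singleton, forall_eq_or_imp, forall_eq]
  grind

variable [DecidableEq α]

open Classical in
/-- The base points spanned by `S`: two points of the same group span the point at infinity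
along with their group. -/
noncomputable def support (S : Finset (Option (α × ι))) : Finset (Option α) :=
  if Set.InjOn base (S : Set (Option (α × ι))) then S.image base else insert none (S.image base)

theorem support_subset_iff : support S ⊆ b ↔
    (∀ p ∈ S, base p ∈ b) ∧ (none ∈ b ∨ Set.InjOn base (S : Set (Option (α × ι)))) := by
  unfold support
  split_ifs with h <;> simp [h, image_subset_iff, insert_subset_iff, and_comm]

theorem support_mono (hST : S ⊆ T) : support S ⊆ support T := by
  have hT := support_subset_iff.1 (Subset.refl (support T))
  exact support_subset_iff.2
    ⟨fun p hp => hT.1 p (hST hp), hT.2.imp_right fun h => h.mono (coe_subset.2 hST)⟩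

theorem exists_support_pair_eq [DecidableEq ι] (hne : y ≠ p) :
    ∃ z, z ≠ base p ∧ support {p, y} = {base p, z} := by
  by_cases h : base y = base p
  · refine ⟨none, (base_ne_none_of_base_eq hne h).symm, ?_⟩
    have hinj : ¬ Set.InjOn base (({p, y} : Finset _) : Set (Option (α × ι))) :=
      fun hinj => hne (hinj (by simp) (by simp) h)
    rw [support, if_neg hinj, image_insert, image_singleton, h, pair_eq_singleton, pair_comm]
  · refine ⟨base y, h, ?_⟩
    have hinj : Set.InjOn base (({p, y} : Finset _) : Set (Option (α × ι))) := by
      simp [Set.InjOn, h, Ne.symm h]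
    rw [support, if_pos hinj, image_insert, image_singleton]

theorem card_support_eq_three (hT : #T = 3) (hgroup : ¬ InGroup T) : #(support T) = 3 := by
  classical
  by_cases hinj : Set.InjOn base (T : Set (Option (α × ι)))
  · rw [support, if_pos hinj, card_image_of_injOn hinj, hT]
  · obtain ⟨x, hx, y, hy, hxy, hne⟩ : ∃ x ∈ T, ∃ y ∈ T, base x = base y ∧ x ≠ y := by
      simpa [Set.InjOn] using hinj
    obtain ⟨z, hz⟩ : ∃ z, (T.erase x).erase y = {z} := card_eq_one.1 <| by
      rw [card_erase_of_mem (mem_erase.2 ⟨hne.symm, hy⟩), card_erase_of_mem hx, hT]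
    obtain rfl : T = {x, y, z} := by
      rw [← hz, insert_erase (mem_erase.2 ⟨hne.symm, hy⟩), insert_erase hx]
    obtain ⟨a, ha⟩ := Option.ne_none_iff_exists'.1 (base_ne_none_of_base_eq hne hxy)
    have hza : base z ≠ none ∧ base z ≠ some a := by
      refine not_or.1 fun h => hgroup ?_
      rw [InGroup]
      grind
    rw [support, if_neg hinj]
    simp only [image_insert, image_singleton, hxy, ha, insert_idem]
    exact card_eq_three.2 ⟨none, some a, base z, by simp, hza.1.symm, hza.2.symm, rfl⟩

/-- The inflated points that project into `b`. -/
noncomputable def pointsOver (ι : Type*) [Fintype ι] (b : Finset (Option α)) :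
    Finset (Option (α × ι)) :=
  {p ∈ insertNone (eraseNone b ×ˢ univ) | base p ∈ b}

variable [Fintype ι]

theorem mem_pointsOver : p ∈ pointsOver ι b ↔ base p ∈ b := by
  rcases p with - | ⟨a, i⟩ <;> simp [pointsOver]

theorem card_filter_base_eq (hb : none ∉ b) (hp : p ∈ pointsOver ι b) :
    #{y ∈ pointsOver ι b | base y = base p} = Fintype.card ι := by
  classical
  rw [mem_pointsOver] at hp
  obtain ⟨a, ha⟩ := Option.ne_none_iff_exists'.1 (ne_of_mem_of_not_mem hp hb)
  have : {y ∈ pointsOver ι b | base y = base p} = univ.image fun i => some (a, i) := by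
    ext (- | ⟨c, i⟩)
    · simp [ha]
    · simp only [mem_filter, mem_pointsOver, base_some, ha]
      aesop
  rw [this, card_image_of_injective _ fun i j hij => by simpa using hij, card_univ]

theorem card_pointsOver [Nonempty ι] (hb : none ∉ b) :
    #(pointsOver ι b) = #b * Fintype.card ι := by
  have himage : (pointsOver ι b).image base = b := by
    ext c
    simp only [mem_image, mem_pointsOver]
    refine ⟨fun ⟨_, hp, hpc⟩ => hpc ▸ hp, fun hc => ?_⟩
    obtain ⟨a, rfl⟩ := Option.ne_none_iff_exists'.1 (ne_of_mem_of_not_mem hc hb)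
    exact ⟨some (a, Classical.arbitrary ι), hc, rfl⟩
  rw [← card_image_mul_of_card_fiber_eq fun p hp => card_filter_base_eq hb hp, himage]

theorem insert_none_pointsOver [DecidableEq ι] :
    insert none (pointsOver ι b) = pointsOver ι (insert none b) := by
  ext p
  simp [mem_pointsOver, base_eq_none_iff]

theorem card_pointsOver_of_none_mem [Nonempty ι] (hb : none ∈ b) :
    #(pointsOver ι b) = (#b - 1) * Fintype.card ι + 1 := by
  classical
  rw [← insert_erase hb, ← insert_none_pointsOver,
    card_insert_of_notMem (by simp [mem_pointsOver]), card_pointsOver (notMem_erase none b),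
    insert_erase hb, card_erase_of_mem hb]

/-- The point at infinity together with the group of `a`. -/
noncomputable def groupBlock (ι : Type*) [Fintype ι] (a : α) : Finset (Option (α × ι)) :=
  pointsOver ι {none, some a}

theorem mem_groupBlock : p ∈ groupBlock ι a ↔ base p = none ∨ base p = some a := by
  simp [groupBlock, mem_pointsOver]

theorem card_groupBlock [Nonempty ι] : #(groupBlock ι a) = Fintype.card ι + 1 := by
  rw [groupBlock, card_pointsOver_of_none_mem (by simp), card_pair (by simp),
    Nat.add_one_sub_one, one_mul]

theorem groupBlock_eq_of_mem {c : α} (hne : y ≠ p) (hp : p ∈ groupBlock ι a)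
    (hy : y ∈ groupBlock ι a) (hp' : p ∈ groupBlock ι c) (hy' : y ∈ groupBlock ι c) : a = c := by
  rw [mem_groupBlock] at hp hy hp' hy'
  have hnone : ¬ (base p = none ∧ base y = none) := fun h =>
    hne ((base_eq_none_iff.1 h.2).trans (base_eq_none_iff.1 h.1).symm)
  grind

theorem InGroup.exists_subset_groupBlock (h : InGroup S) (hSb : S ⊆ pointsOver ι b)
    (hS : 1 < #S) : ∃ a, some a ∈ b ∧ S ⊆ groupBlock ι a := by
  obtain ⟨p, hp, hne⟩ := exists_mem_ne hS none
  have hpbase := mt base_eq_none_iff.1 hne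
  obtain ⟨a, ha⟩ := Option.ne_none_iff_exists'.1 hpbase
  refine ⟨a, ha ▸ mem_pointsOver.1 (hSb hp), fun y hy => mem_groupBlock.2 ?_⟩
  simpa only [ha, eq_comm] using (h p hp y hy).resolve_left hpbase

theorem inGroup_of_subset_groupBlock (h : S ⊆ groupBlock ι a) : InGroup S := by
  intro p hp y hy
  have hp := mem_groupBlock.1 (h hp)
  have hy := mem_groupBlock.1 (h hy)
  grind

end Points

section Ingredients

variable {α ι κ : Type*} [DecidableEq α] [DecidableEq ι] {p y : Option (α × ι)}
  {b : Finset (Option α)} {D F : Set (Finset (Option (α × ι)))}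

/-- The points that the class `m` of an ingredient over `b` has to cover in a resolution at `p`.
The class `none` exists only when `b` contains the point at infinity; it avoids the groups, since
those are covered by group blocks. -/
def classPoints (b : Finset (Option α)) (p : Option (α × ι)) (m : Option κ) :
    Set (Option (α × ι)) :=
  m.elim {y | none ∈ b ∧ base y ∈ b ∧ ¬ InGroup {p, y}} fun _ => {y | y ≠ p ∧ support {p, y} ⊆ b}

/-- The blocks placed over a block `b` of the base design: they cover, once each, the triples
spanning at most `b` that do not lie in a group block. -/
structure IsIngredient (κ : Type*) [Fintype ι] (b : Finset (Option α))
    (F : Set (Finset (Option (α × ι)))) : Prop where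
  card_eq : ∀ s ∈ F, #s = Fintype.card ι + 1
  support_subset : ∀ s ∈ F, support s ⊆ b
  not_inGroup : ∀ s ∈ F, ∀ T ⊆ s, #T = 3 → ¬ InGroup T
  existsUnique_block : ∀ T, #T = 3 → ¬ InGroup T → support T ⊆ b → ∃! s, s ∈ F ∧ T ⊆ s
  exists_resolution : ∀ p, base p ∈ b →
    ∃ P : Option κ → Set (Finset (Option (α × ι))), IsResolutionAt F p (classPoints b p) P

theorem mem_classPoints_some_iff {m : κ} (hp : base p ∈ b) :
    y ∈ classPoints b p (some m) ↔ base y ∈ b ∧ y ≠ p ∧ (none ∈ b ∨ base y ≠ base p) := by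
  have hinj : Set.InjOn base (({p, y} : Finset _) : Set (Option (α × ι))) ↔
      (base y = base p → y = p) := by
    simp only [coe_insert, coe_singleton, Set.injOn_pair, eq_comm]
  change y ≠ p ∧ support {p, y} ⊆ b ↔ _
  simp only [support_subset_iff, mem_insert, mem_singleton, forall_eq_or_imp, forall_eq, hp,
    true_and, hinj]
  tauto

variable [Fintype ι]

theorem isIngredient_of_none_notMem (hb : none ∉ b)
    (hF : IsGroupDesign 3 (Fintype.card ι + 1) (pointsOver ι b) base F)
    (hres : ∀ p ∈ pointsOver ι b, ResolvableAt κ F p {y | y ∈ pointsOver ι b ∧ base y ≠ base p}) :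
    IsIngredient κ b F where
  card_eq := hF.card_eq
  support_subset s hs := support_subset_iff.2
    ⟨fun p hp => mem_pointsOver.1 (hF.subset s hs hp), Or.inr (hF.injOn s hs)⟩
  not_inGroup s hs T hTs hT hgroup := by
    have hTF := hTs.trans (hF.subset s hs)
    have hbase (p) (hp : p ∈ T) : base p ≠ none :=
      ne_of_mem_of_not_mem (mem_pointsOver.1 (hTF hp)) hb
    have hT_le : #T ≤ 1 := card_le_one.2 fun p hp y hy => hF.injOn s hs (hTs hp) (hTs hy)
      (((hgroup p hp y hy).resolve_left (hbase p hp)).resolve_left (hbase y hy))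
    omega
  existsUnique_block T hT _ hTb := by
    rw [support_subset_iff] at hTb
    exact hF.existsUnique_block T (fun p hp => mem_pointsOver.2 (hTb.1 p hp)) hT
      (hTb.2.resolve_left hb)
  exists_resolution p hp := by
    obtain ⟨P, hP⟩ := hres p (mem_pointsOver.2 hp)
    have hpoints : classPoints b p = fun m : Option κ =>
        m.elim ∅ fun _ => {y | y ∈ pointsOver ι b ∧ base y ≠ base p} := by
      ext (- | m) y
      · simp [classPoints, hb]
      · have hne : base y ≠ base p → y ≠ p := mt (congrArg base)
        simp only [mem_classPoints_some_iff hp, Option.elim, Set.mem_ofPred_eq, mem_pointsOver]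
        tauto
    exact ⟨_, hpoints ▸ hP.addEmptyClass⟩

theorem classPoints_eq_of_groupBlock_mem {P : Option κ → Set (Finset (Option (α × ι)))}
    (hb : none ∈ b) (hp : base p ∈ b) (hgroup : ∀ a, some a ∈ b → groupBlock ι a ∈ D)
    (hP : IsResolutionAt D p (fun _ => {y | y ∈ pointsOver ι b ∧ y ≠ p}) P)
    (hPgroup : ∀ a, groupBlock ι a ∈ D → p ∈ groupBlock ι a → groupBlock ι a ∈ P none) :
    classPoints b p = fun m => {y ∈ {y | y ∈ pointsOver ι b ∧ y ≠ p} |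
      ∀ s ∈ P m, y ∈ s → s ∉ Set.range (groupBlock ι)} := by
  ext (- | m) y
  · change none ∈ b ∧ base y ∈ b ∧ ¬ InGroup {p, y} ↔ _
    simp only [Set.mem_ofPred_eq, mem_pointsOver, hb, true_and]
    constructor
    · rintro ⟨hy, hpy⟩
      refine ⟨⟨hy, fun h => hpy (inGroup_pair_iff.2 (by simp [h]))⟩, ?_⟩
      rintro s hs hys ⟨a, rfl⟩
      exact hpy (inGroup_of_subset_groupBlock (insert_subset (hP.mem_block hs).2 (by simpa)))
    · rintro ⟨⟨hy, hne⟩, hs⟩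
      refine ⟨hy, fun hpy => ?_⟩
      obtain ⟨a, hab, hsub⟩ := hpy.exists_subset_groupBlock (b := b)
        (by simp [insert_subset_iff, mem_pointsOver, hp, hy]) (by simp [card_pair hne.symm])
      exact hs _ (hPgroup a (hgroup a hab) (hsub (by simp))) (hsub (by simp)) ⟨a, rfl⟩
  · simp only [mem_classPoints_some_iff hp, Set.mem_ofPred_eq, mem_pointsOver, hb, true_or,
      and_true, iff_self_and]
    rintro - s hs - ⟨a, rfl⟩
    have hblock := hP.mem_block hs
    exact Option.some_ne_none m <| (hP.existsUnique_class _ hblock.1 hblock.2).unique hs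
      (hPgroup a hblock.1 hblock.2)

theorem isIngredient_of_none_mem (hb : none ∈ b)
    (hD : IsGroupDesign 3 (Fintype.card ι + 1) (pointsOver ι b) id D)
    (hgroup : ∀ a, some a ∈ b → groupBlock ι a ∈ D)
    (hres : ∀ p ∈ pointsOver ι b, ∃ P : Option κ → Set (Finset (Option (α × ι))),
      IsResolutionAt D p (fun _ => {y | y ∈ pointsOver ι b ∧ y ≠ p}) P ∧
      ∀ a, groupBlock ι a ∈ D → p ∈ groupBlock ι a → groupBlock ι a ∈ P none) :
    IsIngredient κ b (D \ Set.range (groupBlock ι)) where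
  card_eq s hs := hD.card_eq s hs.1
  support_subset s hs := support_subset_iff.2
    ⟨fun p hp => mem_pointsOver.1 (hD.subset s hs.1 hp), Or.inl hb⟩
  not_inGroup s hs T hTs hT hTgroup := by
    obtain ⟨a, hab, hTa⟩ := hTgroup.exists_subset_groupBlock (hTs.trans (hD.subset s hs.1))
      (by omega)
    refine hs.2 ⟨a, ?_⟩
    exact (hD.existsUnique_block T (hTs.trans (hD.subset s hs.1)) hT (Set.injOn_id _)).unique
      ⟨hgroup a hab, hTa⟩ ⟨hs.1, hTs⟩
  existsUnique_block T hT hTgroup hTb := by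
    obtain ⟨s, hs, hunique⟩ := hD.existsUnique_block T
      (fun p hp => mem_pointsOver.2 ((support_subset_iff.1 hTb).1 p hp)) hT (Set.injOn_id _)
    refine ⟨s, ⟨⟨hs.1, ?_⟩, hs.2⟩, fun t ht => hunique t ⟨ht.1.1, ht.2⟩⟩
    rintro ⟨a, rfl⟩
    exact hTgroup (inGroup_of_subset_groupBlock hs.2)
  exists_resolution p hp := by
    obtain ⟨P, hP, hPgroup⟩ := hres p (mem_pointsOver.2 hp)
    exact ⟨_, classPoints_eq_of_groupBlock_mem hb hp hgroup hP hPgroup ▸ hP.diff _⟩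

end Ingredients

section Placement

variable {α β γ ι : Type*} [DecidableEq α] [Fintype ι] [Nonempty ι] {b : Finset (Option α)}

theorem card_filter_base_ne_and_ne {p y : Option (α × ι)} (hb : none ∉ b)
    (hp : p ∈ pointsOver ι b) (hy : y ∈ pointsOver ι b) (hyp : base y ≠ base p) :
    #{z ∈ pointsOver ι b | base z ≠ base p ∧ base z ≠ base y} = (#b - 2) * Fintype.card ι := by
  rw [mem_pointsOver] at hp hy
  rw [← card_filter_ne_and_ne hp hy hyp, ← card_pointsOver (by simp [hb])]
  congr 1
  ext z
  simp [mem_pointsOver]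

variable {X : Finset β}

theorem exists_finsetCongr_groupBlock_eq [DecidableEq β] [DecidableEq γ] {x₀ : β} {c : β → γ}
    {a : α} (e : β ≃ Option (α × ι)) (hex₀ : e x₀ = none)
    (heX : ∀ x, e x ∈ pointsOver ι b ↔ x ∈ X)
    (he : ∀ x ∈ X.erase x₀, ∀ y ∈ X.erase x₀, base (e x) = base (e y) ↔ c x = c y)
    (ha : some a ∈ b) : ∃ y ∈ X.erase x₀,
      e.symm.finsetCongr (groupBlock ι a) = insert x₀ {z ∈ X.erase x₀ | c z = c y} := by
  have hmem {z} (hz : base (e z) = some a) : z ∈ X.erase x₀ := mem_erase.2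
    ⟨fun h => by simp [h, hex₀] at hz, (heX z).1 (mem_pointsOver.2 (hz ▸ ha))⟩
  obtain ⟨y, hy⟩ := e.surjective (some (a, Classical.arbitrary ι))
  have hya : base (e y) = some a := by rw [hy, base_some]
  refine ⟨y, hmem hya, ?_⟩
  ext z
  rw [e.symm.finsetCongr_apply, mem_map_equiv, e.symm_symm, mem_groupBlock, base_eq_none_iff,
    ← hex₀, e.apply_eq_iff_eq, mem_insert, mem_filter]
  exact or_congr_right ⟨fun hz => ⟨hmem hz, (he z (hmem hz) y (hmem hya)).1 (hz.trans hya.symm)⟩,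
    fun hz => ((he z hz.1 y (hmem hya)).2 hz.2).trans hya⟩

variable [Countable α] [Infinite α] [Countable β] [Infinite β]

theorem exists_isIngredient_of_none_notMem [DecidableEq ι] [DecidableEq γ] {B : Set (Finset β)}
    {g : β → γ} {r : ℕ} (hB : IsResolvableDesign 3 (Fintype.card ι + 1) X g B)
    (hι : 1 < Fintype.card ι) (hX : #X = #b * Fintype.card ι)
    (hg : ∀ x ∈ X, #{y ∈ X | g y = g x} = Fintype.card ι) (hb : none ∉ b)
    (hb_card : 1 < #b) (hr : (Fintype.card ι - 1) * r = (#b - 2) * Fintype.card ι) :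
    ∃ F : Set (Finset (Option (α × ι))), IsIngredient (Fin r) b F := by
  obtain ⟨e, heX, he⟩ := exists_equiv_of_card_fiber_eq (Y := pointsOver ι b) Fintype.card_pos
    (hX.trans (card_pointsOver hb).symm) hg fun p hp => card_filter_base_eq hb hp
  have hF := hB.map e heX he
  refine ⟨_, isIngredient_of_none_notMem hb hF.toIsGroupDesign fun p hp => ?_⟩
  obtain ⟨c, hc, hcp⟩ := exists_mem_ne hb_card (base p)
  obtain ⟨a, rfl⟩ := Option.ne_none_iff_exists'.1 (ne_of_mem_of_not_mem hc hb)
  have hy : some (a, Classical.arbitrary ι) ∈ pointsOver ι b := mem_pointsOver.2 hc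
  exact hF.resolvableAt_fin (by omega) hp hy hcp
    (hr.trans (card_filter_base_ne_and_ne hb hp hy hcp).symm)

theorem exists_equiv_pointsOver [DecidableEq β] [DecidableEq γ] {x₀ : β} {c : β → γ}
    (hx₀ : x₀ ∈ X) (hc : ∀ y ∈ X.erase x₀, #{z ∈ X.erase x₀ | c z = c y} = Fintype.card ι)
    (hb : none ∈ b) (hX : #X = (#b - 1) * Fintype.card ι + 1) :
    ∃ e : β ≃ Option (α × ι), e x₀ = none ∧ (∀ x, e x ∈ pointsOver ι b ↔ x ∈ X) ∧
      ∀ x ∈ X.erase x₀, ∀ y ∈ X.erase x₀, base (e x) = base (e y) ↔ c x = c y := by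
  classical
  have hb' : none ∉ b.erase none := notMem_erase none b
  have hcard : #(X.erase x₀) = #(pointsOver ι (b.erase none)) := by
    rw [card_pointsOver hb', card_erase_of_mem hx₀, card_erase_of_mem hb, hX, Nat.add_sub_cancel]
  obtain ⟨e, heX, he⟩ := exists_equiv_of_card_fiber_eq Fintype.card_pos hcard hc
    fun p hp => card_filter_base_eq hb' hp
  obtain ⟨e', hex₀, heX', he'⟩ := exists_equiv_apply_eq (y₀ := none) e heX (notMem_erase x₀ X)
    fun h => hb' (mem_pointsOver.1 h)
  refine ⟨e', hex₀, fun x => ?_, fun x hx y hy => by rw [he' x hx, he' y hy, he x hx y hy]⟩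
  rw [← insert_erase hb, ← insert_none_pointsOver, mem_insert, heX', ← hex₀, e'.apply_eq_iff_eq,
    ← mem_insert, insert_erase hx₀]

/-- `C` plays the role of a parallel class of the derived design at `x₀`. -/
theorem exists_equiv_groupBlock_mem {C : Set (Finset β)} {x₀ : β} (hx₀ : x₀ ∈ X)
    (hC : ∀ s ∈ C, x₀ ∈ s ∧ s ⊆ X ∧ #s = Fintype.card ι + 1)
    (hC_unique : ∀ y ∈ X, y ≠ x₀ → ∃! s, s ∈ C ∧ y ∈ s)
    (hb : none ∈ b) (hX : #X = (#b - 1) * Fintype.card ι + 1) :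
    ∃ e : β ≃ Option (α × ι), e x₀ = none ∧ (∀ x, e x ∈ pointsOver ι b ↔ x ∈ X) ∧
      ∀ a, some a ∈ b → e.symm.finsetCongr (groupBlock ι a) ∈ C := by
  classical
  simp only [← and_imp, ← mem_erase, and_comm (a := _ ∈ X)] at hC_unique
  choose! c hc hc_unique using hC_unique
  have hmem {y z} (hy : y ∈ X.erase x₀) (hz : z ∈ X.erase x₀) : c z = c y ↔ z ∈ c y :=
    ⟨fun h => h ▸ (hc z hz).2, fun h => (hc_unique z hz _ ⟨(hc y hy).1, h⟩).symm⟩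
  have hfiber y (hy : y ∈ X.erase x₀) : insert x₀ {z ∈ X.erase x₀ | c z = c y} = c y := by
    obtain ⟨hx₀c, hcX, -⟩ := hC _ (hc y hy).1
    rw [filter_congr fun z hz => hmem hy hz, filter_mem_eq_inter, erase_inter,
      insert_erase (mem_inter.2 ⟨hx₀, hx₀c⟩), inter_eq_right.2 hcX]
  have hcard_fiber y (hy : y ∈ X.erase x₀) : #{z ∈ X.erase x₀ | c z = c y} = Fintype.card ι := by
    rw [← Nat.add_right_cancel_iff (n := 1), ← card_insert_of_notMem (a := x₀) (by simp),
      hfiber y hy, (hC _ (hc y hy).1).2.2]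
  obtain ⟨e, hex₀, heX, he⟩ := exists_equiv_pointsOver (ι := ι) hx₀ hcard_fiber hb hX
  refine ⟨e, hex₀, heX, fun a ha => ?_⟩
  obtain ⟨y, hy, hya⟩ := exists_finsetCongr_groupBlock_eq e hex₀ heX he ha
  rw [hya, hfiber y hy]
  exact (hc y hy).1

theorem exists_isIngredient_of_none_mem [DecidableEq ι] {B : Set (Finset β)} {r : ℕ}
    (hB : IsResolvableDesign 3 (Fintype.card ι + 1) X id B) (hι : 1 < Fintype.card ι)
    (hX : #X = (#b - 1) * Fintype.card ι + 1) (hb : none ∈ b) (hb_card : 1 < #b)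
    (hr : (Fintype.card ι - 1) * (r + 1) = #X - 2) :
    ∃ F : Set (Finset (Option (α × ι))), IsIngredient (Fin r) b F := by
  classical
  have hX_card : 1 < #X := by
    have : 0 < (#b - 1) * Fintype.card ι := Nat.mul_pos (by omega) (by omega)
    omega
  have hres x (hx : x ∈ X) : ResolvableAt (Option (Fin r)) B x {y | y ∈ X ∧ y ≠ x} :=
    hB.resolvableAt_option (by omega) hX_card hx hr
  obtain ⟨x₀, hx₀⟩ := card_pos.1 (zero_lt_one.trans hX_card)
  obtain ⟨P₀, hP₀⟩ := hres x₀ hx₀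
  obtain ⟨e, hex₀, heX, hgroup⟩ := exists_equiv_groupBlock_mem (ι := ι) (C := P₀ none) hx₀
    (fun s hs => have hsB := hP₀.mem_block hs
      ⟨hsB.2, hB.subset s hsB.1, hB.card_eq s hsB.1⟩)
    (fun y hy hne => hP₀.existsUnique_block none y ⟨hy, hne⟩) hb hX
  have hD := hB.toIsGroupDesign.map (l := id) e heX fun x _ y _ => e.apply_eq_iff_eq
  have hgroup_mem a (ha : groupBlock ι a ∈ e.symm.finsetCongr ⁻¹' B) : some a ∈ b :=
    have hmem : some (a, Classical.arbitrary ι) ∈ groupBlock ι a := by simp [mem_groupBlock]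
    mem_pointsOver.1 (hD.subset _ ha hmem)
  refine ⟨_, isIngredient_of_none_mem hb hD (fun a ha => (hP₀.mem_block (hgroup a ha)).1) ?_⟩
  refine e.forall_congr_right.1 fun x hx => ?_
  have hpoints : e.symm ⁻¹' {y | y ∈ X ∧ y ≠ x} = {y | y ∈ pointsOver ι b ∧ y ≠ e x} := by
    ext y
    obtain ⟨y, rfl⟩ := e.surjective y
    simp [heX]
  by_cases hxx₀ : x = x₀
  · subst hxx₀
    exact ⟨_, hpoints ▸ hP₀.map e, fun a ha _ => hgroup a (hgroup_mem a ha)⟩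
  have hne : base (e x) ≠ none := by
    rwa [Ne, base_eq_none_iff, ← hex₀, e.apply_eq_iff_eq]
  obtain ⟨a, ha⟩ := Option.ne_none_iff_exists'.1 hne
  obtain ⟨P, hP, haP⟩ := (hres x ((heX x).1 hx)).exists_mem_none
    (hP₀.mem_block (hgroup a (ha ▸ mem_pointsOver.1 hx))).1 (by simp [mem_groupBlock, ha])
  refine ⟨_, hpoints ▸ hP.map e, fun c _ hc => ?_⟩
  obtain rfl : a = c := by simpa [mem_groupBlock, ha] using hc
  exact haP

theorem exists_forall_exists_isIngredient [DecidableEq ι] [DecidableEq γ] {k : ℕ}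
    {Z : Finset β} {g : β → γ} {B C : Set (Finset β)} (hι : 1 < Fintype.card ι) (hk : 0 < k)
    (hB : IsResolvableDesign 3 (Fintype.card ι + 1) X id B) (hX : #X = Fintype.card ι * k + 1)
    (hC : IsResolvableDesign 3 (Fintype.card ι + 1) Z g C) (hZ : #Z = Fintype.card ι * (k + 1))
    (hg : ∀ x ∈ Z, #{y ∈ Z | g y = g x} = Fintype.card ι) :
    ∃ r : ℕ, ∀ b : Finset (Option α), #b = k + 1 →
      ∃ F : Set (Finset (Option (α × ι))), IsIngredient (Fin r) b F := by
  have hX_sub : #X - 2 = Fintype.card ι - 1 + (k - 1) * Fintype.card ι := by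
    obtain ⟨l, rfl⟩ := Nat.exists_eq_add_one.2 hk
    rw [hX, mul_add_one, mul_comm, Nat.add_sub_cancel]
    omega
  obtain ⟨m, hm⟩ := hB.exists_mul_eq_card_sub_two (by nlinarith)
  rw [Nat.add_sub_add_right (Fintype.card ι) 1 1] at hm
  obtain ⟨r, rfl⟩ := Nat.exists_eq_add_one_of_ne_zero (n := m) <| by
    rintro rfl
    omega
  have hr : (Fintype.card ι - 1) * r = (k - 1) * Fintype.card ι := by
    rw [hX_sub, mul_add_one, add_comm] at hm
    exact Nat.add_left_cancel hm
  refine ⟨r, fun b hb => ?_⟩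
  by_cases hnone : none ∈ b
  · refine exists_isIngredient_of_none_mem hB hι ?_ hnone (by omega) hm
    rw [hX, hb, Nat.add_sub_cancel, mul_comm]
  · refine exists_isIngredient_of_none_notMem hC hι ?_ hg hnone (by omega) ?_
    · rw [hZ, hb, mul_comm]
    · rw [hr, hb, Nat.add_sub_add_right k 1 1]

end Placement

section Gluing

variable {α ι κ κ₀ : Type*} [DecidableEq α] {k : ℕ} {p y : Option (α × ι)}
  {s : Finset (Option (α × ι))} {b c : Finset (Option α)}
  {X : Finset (Option α)} {B : Set (Finset (Option α))}
  {F : Finset (Option α) → Set (Finset (Option (α × ι)))}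
  {R : κ₀ → Set (Finset (Option α))}
  {P : Finset (Option α) → Option κ → Set (Finset (Option (α × ι)))}

theorem eq_of_support_subset (hB : IsGroupDesign 3 k X id B) {T : Finset (Option (α × ι))}
    (hT : #T = 3) (hgroup : ¬ InGroup T) (hb : b ∈ B) (hc : c ∈ B) (hTb : support T ⊆ b)
    (hTc : support T ⊆ c) : b = c :=
  (hB.existsUnique_block _ (hTb.trans (hB.subset b hb)) (card_support_eq_three hT hgroup)
    (Set.injOn_id _)).unique ⟨hb, hTb⟩ ⟨hc, hTc⟩

variable [Fintype ι]

/-- The group blocks over `X` together with the ingredients `F b` over the blocks `b` of `B`. -/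
def gluedBlocks (X : Finset (Option α)) (B : Set (Finset (Option α)))
    (F : Finset (Option α) → Set (Finset (Option (α × ι)))) : Set (Finset (Option (α × ι))) :=
  {s | (∃ a, some a ∈ X ∧ s = groupBlock ι a) ∨ ∃ b ∈ B, s ∈ F b}

variable [DecidableEq ι]

theorem IsIngredient.exists_not_inGroup (hF : IsIngredient κ b (F b)) (hι : 1 < Fintype.card ι)
    (hs : s ∈ F b) : ∃ T ⊆ s, #T = 3 ∧ ¬ InGroup T := by
  obtain ⟨T, hTs, hT⟩ := exists_subset_card_eq (s := s) (n := 3) (by rw [hF.card_eq s hs]; omega)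
  exact ⟨T, hTs, hT, hF.not_inGroup s hs T hTs hT⟩

theorem groupBlock_notMem_of_isIngredient (hF : IsIngredient κ b (F b)) (hι : 1 < Fintype.card ι)
    (a : α) : groupBlock ι a ∉ F b := fun h => by
  obtain ⟨T, hT, -, hgroup⟩ := hF.exists_not_inGroup hι h
  exact hgroup (inGroup_of_subset_groupBlock hT)

theorem eq_of_mem_ingredient (hB : IsGroupDesign 3 k X id B)
    (hF : ∀ b ∈ B, IsIngredient κ b (F b)) (hι : 1 < Fintype.card ι) (hb : b ∈ B) (hc : c ∈ B)
    (hsb : s ∈ F b) (hsc : s ∈ F c) : b = c := by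
  obtain ⟨T, hTs, hT, hgroup⟩ := (hF b hb).exists_not_inGroup hι hsb
  exact eq_of_support_subset hB hT hgroup hb hc
    ((support_mono hTs).trans ((hF b hb).support_subset s hsb))
    ((support_mono hTs).trans ((hF c hc).support_subset s hsc))

theorem existsUnique_gluedBlocks_of_inGroup (hF : ∀ b ∈ B, IsIngredient κ b (F b))
    {T : Finset (Option (α × ι))} (hTX : T ⊆ pointsOver ι X) (hT : #T = 3) (hgroup : InGroup T) :
    ∃! s, s ∈ gluedBlocks X B F ∧ T ⊆ s := by
  obtain ⟨a, ha, hTa⟩ := hgroup.exists_subset_groupBlock hTX (by omega)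
  refine ⟨groupBlock ι a, ⟨Or.inl ⟨a, ha, rfl⟩, hTa⟩, ?_⟩
  rintro s ⟨⟨c, -, rfl⟩ | ⟨b, hb, hs⟩, hTs⟩
  · obtain ⟨x, hx, y, hy, hne⟩ := one_lt_card.1 (by omega : 1 < #T)
    rw [groupBlock_eq_of_mem hne.symm (hTs hx) (hTs hy) (hTa hx) (hTa hy)]
  · exact ((hF b hb).not_inGroup s hs T hTs hT hgroup).elim

theorem existsUnique_gluedBlocks_of_not_inGroup (hB : IsGroupDesign 3 k X id B)
    (hF : ∀ b ∈ B, IsIngredient κ b (F b)) (hX : none ∈ X) {T : Finset (Option (α × ι))}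
    (hTX : T ⊆ pointsOver ι X) (hT : #T = 3) (hgroup : ¬ InGroup T) :
    ∃! s, s ∈ gluedBlocks X B F ∧ T ⊆ s := by
  have hsupport : support T ⊆ X :=
    support_subset_iff.2 ⟨fun p hp => mem_pointsOver.1 (hTX hp), Or.inl hX⟩
  obtain ⟨b, ⟨hb, hTb⟩, -⟩ := hB.existsUnique_block (support T) hsupport
    (card_support_eq_three hT hgroup) (Set.injOn_id _)
  obtain ⟨s, ⟨hs, hTs⟩, hs_unique⟩ := (hF b hb).existsUnique_block T hT hgroup hTb
  refine ⟨s, ⟨Or.inr ⟨b, hb, hs⟩, hTs⟩, ?_⟩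
  rintro t ⟨⟨a, -, rfl⟩ | ⟨c, hc, ht⟩, hTt⟩
  · exact (hgroup (inGroup_of_subset_groupBlock hTt)).elim
  · obtain rfl : b = c := eq_of_support_subset hB hT hgroup hb hc hTb
      ((support_mono hTt).trans ((hF c hc).support_subset t ht))
    exact hs_unique t ⟨ht, hTt⟩

theorem isGroupDesign_gluedBlocks [Nonempty ι] (hB : IsGroupDesign 3 k X id B)
    (hF : ∀ b ∈ B, IsIngredient κ b (F b)) (hX : none ∈ X) :
    IsGroupDesign 3 (Fintype.card ι + 1) (pointsOver ι X) id (gluedBlocks X B F) where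
  subset := by
    rintro s (⟨a, ha, rfl⟩ | ⟨b, hb, hs⟩) y hy <;> rw [mem_pointsOver]
    · rcases mem_groupBlock.1 hy with h | h <;> rwa [h]
    · exact hB.subset b hb ((support_subset_iff.1 ((hF b hb).support_subset s hs)).1 y hy)
  card_eq := by
    rintro s (⟨a, -, rfl⟩ | ⟨b, hb, hs⟩)
    · exact card_groupBlock
    · exact (hF b hb).card_eq s hs
  injOn _ _ := Set.injOn_id _
  existsUnique_block T hTX hT _ := by
    by_cases hgroup : InGroup T
    · exact existsUnique_gluedBlocks_of_inGroup hF hTX hT hgroup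
    · exact existsUnique_gluedBlocks_of_not_inGroup hB hF hX hTX hT hgroup

/-- The classes of the glued design at `p`, built from the classes `R i` of the base design at
`base p` and the classes `P b m` of the ingredients at `p`. The class `none` collects the group
blocks through `p` and the classes `none` of all ingredients. -/
def gluedClass (X : Finset (Option α)) (B : Set (Finset (Option α)))
    (R : κ₀ → Set (Finset (Option α)))
    (P : Finset (Option α) → Option κ → Set (Finset (Option (α × ι)))) (p : Option (α × ι))
    (m : Option (κ₀ × κ)) : Set (Finset (Option (α × ι))) :=
  m.elim {s | (∃ a, some a ∈ X ∧ s = groupBlock ι a ∧ p ∈ s) ∨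
      ∃ b ∈ B, base p ∈ b ∧ s ∈ P b none}
    fun im => {s | ∃ b ∈ R im.1, s ∈ P b (some im.2)}

theorem existsUnique_gluedClass_groupBlock {Y : κ₀ → Set (Option α)} {a : α}
    (hF : ∀ b ∈ B, IsIngredient κ b (F b)) (hι : 1 < Fintype.card ι)
    (hR : IsResolutionAt B (base p) Y R)
    (hP : ∀ b ∈ B, base p ∈ b → IsResolutionAt (F b) p (classPoints b p) (P b))
    (ha : some a ∈ X) (hp : p ∈ groupBlock ι a) :
    ∃! m, groupBlock ι a ∈ gluedClass X B R P p m := by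
  refine ⟨none, Or.inl ⟨a, ha, rfl, hp⟩, ?_⟩
  rintro (- | ⟨i, m⟩) h
  · rfl
  · obtain ⟨b, hb, hs⟩ := h
    obtain ⟨hbB, hpb⟩ := hR.mem_block hb
    exact (groupBlock_notMem_of_isIngredient (hF b hbB) hι a ((hP b hbB hpb).mem_block hs).1).elim

theorem existsUnique_gluedClass_of_mem {Y : κ₀ → Set (Option α)}
    (hB : IsGroupDesign 3 k X id B) (hF : ∀ b ∈ B, IsIngredient κ b (F b))
    (hι : 1 < Fintype.card ι) (hR : IsResolutionAt B (base p) Y R)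
    (hP : ∀ b ∈ B, base p ∈ b → IsResolutionAt (F b) p (classPoints b p) (P b))
    (hb : b ∈ B) (hs : s ∈ F b) (hp : p ∈ s) : ∃! m, s ∈ gluedClass X B R P p m := by
  have hpb : base p ∈ b := (support_subset_iff.1 ((hF b hb).support_subset s hs)).1 p hp
  have heq {c m} (hc : c ∈ B) (hpc : base p ∈ c) (hsc : s ∈ P c m) : b = c :=
    eq_of_mem_ingredient hB hF hι hb hc hs ((hP c hc hpc).mem_block hsc).1
  obtain ⟨m, hm, hm_unique⟩ := (hP b hb hpb).existsUnique_class s hs hp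
  obtain ⟨i, hi, hi_unique⟩ := hR.existsUnique_class b hb hpb
  have hnone : s ∈ gluedClass X B R P p none ↔ s ∈ P b none := by
    refine ⟨?_, fun h => Or.inr ⟨b, hb, hpb, h⟩⟩
    rintro (⟨a, -, rfl, -⟩ | ⟨c, hc, hpc, hsc⟩)
    · exact (groupBlock_notMem_of_isIngredient (hF b hb) hι a hs).elim
    · rwa [heq hc hpc hsc]
  have hsome (j n) : s ∈ gluedClass X B R P p (some (j, n)) ↔ b ∈ R j ∧ s ∈ P b (some n) := by
    refine ⟨?_, fun h => ⟨b, h⟩⟩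
    rintro ⟨c, hc, hsc⟩
    obtain rfl := heq (hR.mem_block hc).1 (hR.mem_block hc).2 hsc
    exact ⟨hc, hsc⟩
  refine ⟨m.map (i, ·), ?_, ?_⟩
  · cases m with
    | none => exact hnone.2 hm
    | some m => exact (hsome i m).2 ⟨hi, hm⟩
  · rintro (- | ⟨j, n⟩) h
    · rw [← hm_unique none (hnone.1 h), Option.map_none]
    · obtain ⟨hj, hn⟩ := (hsome j n).1 h
      rw [← hm_unique (some n) hn, ← hi_unique j hj, Option.map_some]

theorem existsUnique_block_gluedClass_some {i : κ₀} {m : κ} (hX : none ∈ X)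
    (hR : IsResolutionAt B (base p) (fun _ => {z | z ∈ X ∧ z ≠ base p}) R)
    (hP : ∀ b ∈ B, base p ∈ b → IsResolutionAt (F b) p (classPoints b p) (P b))
    (hpX : base p ∈ X) (hyX : base y ∈ X) (hne : y ≠ p) :
    ∃! s, s ∈ gluedClass X B R P p (some (i, m)) ∧ y ∈ s := by
  obtain ⟨z, hz, hsupport⟩ := exists_support_pair_eq hne
  have hzX : z ∈ X := by
    have : support {p, y} ⊆ X := support_subset_iff.2 ⟨by simp [hpX, hyX], Or.inl hX⟩
    exact this (by simp [hsupport])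
  obtain ⟨b, ⟨hb, hzb⟩, hb_unique⟩ := hR.existsUnique_block i z ⟨hzX, hz⟩
  obtain ⟨hbB, hpb⟩ := hR.mem_block hb
  have hy : y ∈ classPoints b p (some m) :=
    ⟨hne, by simp [hsupport, insert_subset_iff, hpb, hzb]⟩
  obtain ⟨s, ⟨hs, hys⟩, hs_unique⟩ := (hP b hbB hpb).existsUnique_block (some m) y hy
  refine ⟨s, ⟨⟨b, hb, hs⟩, hys⟩, ?_⟩
  rintro t ⟨⟨c, hc, ht⟩, hyt⟩
  obtain ⟨hcB, hpc⟩ := hR.mem_block hc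
  have hyc : support {p, y} ⊆ c := ((hP c hcB hpc).mem_points ht y hyt hne).2
  obtain rfl := hb_unique c ⟨hc, hyc (by simp [hsupport])⟩
  exact hs_unique t ⟨ht, hyt⟩

theorem existsUnique_block_gluedClass_none_of_inGroup
    (hP : ∀ b ∈ B, base p ∈ b → IsResolutionAt (F b) p (classPoints b p) (P b))
    (hpX : base p ∈ X) (hyX : base y ∈ X) (hne : y ≠ p) (hgroup : InGroup {p, y}) :
    ∃! s, s ∈ gluedClass X B R P p none ∧ y ∈ s := by
  obtain ⟨a, ha, hsub⟩ := hgroup.exists_subset_groupBlock (ι := ι) (b := X)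
    (by simp [insert_subset_iff, mem_pointsOver, hpX, hyX]) (by rw [card_pair hne.symm]; simp)
  have hpa : p ∈ groupBlock ι a := hsub (by simp)
  have hya : y ∈ groupBlock ι a := hsub (by simp)
  refine ⟨groupBlock ι a, ⟨Or.inl ⟨a, ha, rfl, hpa⟩, hya⟩, ?_⟩
  rintro t ⟨⟨c, -, rfl, hpc⟩ | ⟨b, hb, hpb, ht⟩, hyt⟩
  · rw [groupBlock_eq_of_mem hne hpc hyt hpa hya]
  · exact (((hP b hb hpb).mem_points ht y hyt hne).2.2 hgroup).elim

theorem existsUnique_block_gluedClass_none_of_not_inGroup (hB : IsGroupDesign 3 k X id B)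
    (hX : none ∈ X) (hP : ∀ b ∈ B, base p ∈ b → IsResolutionAt (F b) p (classPoints b p) (P b))
    (hpX : base p ∈ X) (hyX : base y ∈ X) (hne : y ≠ p) (hgroup : ¬ InGroup {p, y}) :
    ∃! s, s ∈ gluedClass X B R P p none ∧ y ∈ s := by
  have hbase := hgroup
  rw [inGroup_pair_iff, not_or, not_or] at hbase
  obtain ⟨b, ⟨hb, hnb, hpb, hyb⟩, hb_unique⟩ := hB.existsUnique_block_triple hX hpX hyX
    hbase.1 hbase.2.1 (Ne.symm hbase.2.2)
  obtain ⟨s, ⟨hs, hys⟩, hs_unique⟩ :=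
    (hP b hb hpb).existsUnique_block none y ⟨hnb, hyb, hgroup⟩
  refine ⟨s, ⟨Or.inr ⟨b, hb, hpb, hs⟩, hys⟩, ?_⟩
  rintro t ⟨⟨a, -, rfl, hpa⟩ | ⟨c, hc, hpc, ht⟩, hyt⟩
  · exact (hgroup (inGroup_of_subset_groupBlock (insert_subset hpa (by simpa)))).elim
  · obtain ⟨hnc, hyc, -⟩ := (hP c hc hpc).mem_points ht y hyt hne
    obtain rfl := hb_unique c ⟨hc, hnc, hpc, hyc⟩
    exact hs_unique t ⟨ht, hyt⟩

theorem isResolutionAt_gluedClass (hB : IsGroupDesign 3 k X id B)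
    (hF : ∀ b ∈ B, IsIngredient κ b (F b)) (hι : 1 < Fintype.card ι) (hX : none ∈ X)
    (hR : IsResolutionAt B (base p) (fun _ => {z | z ∈ X ∧ z ≠ base p}) R)
    (hP : ∀ b ∈ B, base p ∈ b → IsResolutionAt (F b) p (classPoints b p) (P b))
    (hpX : base p ∈ X) :
    IsResolutionAt (gluedBlocks X B F) p (fun _ => {y | y ∈ pointsOver ι X ∧ y ≠ p})
      (gluedClass X B R P p) := by
  have : Nonempty ι := Fintype.card_pos_iff.1 (by omega)
  have hmem {m s} (hs : s ∈ gluedClass X B R P p m) : s ∈ gluedBlocks X B F ∧ p ∈ s := by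
    obtain - | ⟨i, m⟩ := m
    · obtain ⟨a, ha, rfl, hp⟩ | ⟨b, hb, hpb, hs⟩ := hs
      · exact ⟨Or.inl ⟨a, ha, rfl⟩, hp⟩
      · exact ((hP b hb hpb).mem_block hs).imp_left fun hs => Or.inr ⟨b, hb, hs⟩
    · obtain ⟨b, hb, hs⟩ := hs
      obtain ⟨hb, hpb⟩ := hR.mem_block hb
      exact ((hP b hb hpb).mem_block hs).imp_left fun hs => Or.inr ⟨b, hb, hs⟩
  refine ⟨fun _ _ => hmem, fun _ s hs y hy hne =>
    ⟨(isGroupDesign_gluedBlocks hB hF hX).subset s (hmem hs).1 hy, hne⟩, ?_, ?_⟩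
  · rintro s (⟨a, ha, rfl⟩ | ⟨b, hb, hs⟩) hp
    · exact existsUnique_gluedClass_groupBlock hF hι hR hP ha hp
    · exact existsUnique_gluedClass_of_mem hB hF hι hR hP hb hs hp
  · rintro (- | ⟨i, m⟩) y ⟨hy, hne⟩ <;> rw [mem_pointsOver] at hy
    · by_cases hgroup : InGroup {p, y}
      · exact existsUnique_block_gluedClass_none_of_inGroup hP hpX hy hne hgroup
      · exact existsUnique_block_gluedClass_none_of_not_inGroup hB hX hP hpX hy hne hgroup
    · exact existsUnique_block_gluedClass_some hX hR hP hpX hy hne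

theorem isResolvableDesign_gluedBlocks [Finite κ] (hB : IsResolvableDesign 3 k X id B)
    (hF : ∀ b ∈ B, IsIngredient κ b (F b)) (hι : 1 < Fintype.card ι) (hX : none ∈ X) :
    IsResolvableDesign 3 (Fintype.card ι + 1) (pointsOver ι X) id (gluedBlocks X B F) where
  toIsGroupDesign :=
    have : Nonempty ι := Fintype.card_pos_iff.1 (by omega)
    isGroupDesign_gluedBlocks hB.toIsGroupDesign hF hX
  resolvableAt p hp := by
    rw [mem_pointsOver] at hp
    obtain ⟨r, R, hR⟩ := hB.resolvableAt (base p) hp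
    choose! P hP using fun b hb => (hF b hb).exists_resolution p
    exact ResolvableAt.exists_fin (κ := Option (Fin r × κ))
      ⟨_, isResolutionAt_gluedClass hB.toIsGroupDesign hF hι hX hR hP hp⟩

end Gluing

end Inflation

theorem stmt_4_general (q k n : ℕ) (hq : 1 < q) (hk : 0 < k)
    (h1 : ExistsRDS 3 (k + 1) (n + 1))
    (h2 : ExistsRDS 3 (q + 1) (q * k + 1))
    (h3 : ∃ X Gs Bs, IsRDGDD 3 {q + 1} q (k + 1) X Gs Bs) :
    ExistsRDS 3 (q + 1) (q * n + 1) := by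
  obtain ⟨Xbase, Bbase, hbase⟩ := h1
  obtain ⟨Xrds, Brds, hrds⟩ := h2
  obtain ⟨Xgdd, Gs, Bgdd, hgdd⟩ := h3
  obtain ⟨hXbase, hbase⟩ := isRDS_iff.1 hbase
  obtain ⟨hXrds, hrds⟩ := isRDS_iff.1 hrds
  have hXgdd : #Xgdd = q * (k + 1) := hgdd.1.1
  have : NeZero q := ⟨by omega⟩
  obtain ⟨g, hgdd, hg⟩ := hgdd.exists_isResolvableDesign
  obtain ⟨X, B, hX, hXcard, hB⟩ := hbase.exists_none_mem (card_pos.1 (by omega))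
  obtain ⟨r, hr⟩ := Inflation.exists_forall_exists_isIngredient (α := ℕ) (ι := Fin q)
    (by simpa using hq) hk (by simpa using hrds) (by simpa using hXrds) (by simpa using hgdd)
    (by simpa using hXgdd) (by simpa using hg)
  choose! F hF using hr
  have hglued := Inflation.isResolvableDesign_gluedBlocks hB (fun b hb => hF b (hB.card_eq b hb))
    (by simpa using hq) hX
  simpa [Inflation.card_pointsOver_of_none_mem hX, hXcard, hXbase, mul_comm] using
    existsRDS_of_isResolvableDesign hglued

/-- If there exist an RDS(3, k+1, n+1), an RDSQS(3k+1) and an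
RDGDD(3, 4, 3(k+1)) of type 3^(k+1), then there exists an RDSQS(3n+1). -/
theorem stmt_4 (k n : ℕ) (hk : 0 < k) (hn : 0 < n)
    (h1 : ExistsRDS 3 (k + 1) (n + 1))
    (h2 : ExistsRDSQS (3 * k + 1))
    (h3 : ∃ X Gs Bs, IsRDGDD 3 {4} 3 (k + 1) X Gs Bs) :
    ExistsRDSQS (3 * n + 1) :=
  stmt_4_general 3 k n (by norm_num) hk h1 h2 h3
end

section
/- There exists an RDSQS(22), i.e., a Steiner quadruple system SQS(22) whose derived design at every point is a KTS(21). -/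
open Finset

/-!
The system lives on `ℤ/21 ∪ {∞}`, realised as `{0, …, 20} ∪ {21}`, and is invariant under the
rotations `x ↦ x + a`, which fix `∞`. A block that meets `ℤ/21` can be rotated so as to contain
`0`, so the whole system is recovered from its derived triples at `0`. Conversely, a Steiner triple
system on the points other than `0` develops into a quadruple system provided that rotating a
block `{0} ∪ T` to one through `0` always gives another such block. As the rotations have only the
two orbits `ℤ/21` and `{∞}`, it remains to resolve the derived designs at `0` and at `∞`.
-/

open scoped Pointwise

theorem existsUnique_mem_and_iff_card_filter_eq_one {α : Type*} (s : Finset α) (p : α → Prop)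
    [DecidablePred p] : (∃! a, a ∈ s ∧ p a) ↔ #{a ∈ s | p a} = 1 := by
  simp only [card_eq_one, singleton_iff_unique_mem, mem_filter]

theorem isParallelClass_iff_card_filter {Y : Finset ℕ} {P : Finset (Finset ℕ)} :
    IsParallelClass Y P ↔ (∀ b ∈ P, b ⊆ Y) ∧ ∀ y ∈ Y, #{b ∈ P | y ∈ b} = 1 := by
  simp only [IsParallelClass, existsUnique_mem_and_iff_card_filter_eq_one]

theorem isSteiner_iff_card_filter {t k v : ℕ} {X : Finset ℕ} {B : Finset (Finset ℕ)} :
    IsSteiner t k v X B ↔ #X = v ∧ (∀ b ∈ B, b ⊆ X ∧ #b = k) ∧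
      ∀ T ∈ X.powersetCard t, #{b ∈ B | T ⊆ b} = 1 := by
  simp only [IsSteiner, existsUnique_mem_and_iff_card_filter_eq_one, mem_powersetCard, and_imp]

theorem resolvable_disjiUnion {Y : Finset ℕ} {r : ℕ} {P : Fin r → Finset (Finset ℕ)}
    (hP : ∀ i, IsParallelClass Y (P i))
    (hdisj : ((univ : Finset (Fin r)) : Set (Fin r)).PairwiseDisjoint P) :
    Resolvable Y (univ.disjiUnion P hdisj) := by
  have mem_iff (b : Finset ℕ) : b ∈ univ.disjiUnion P hdisj ↔ ∃ i, b ∈ P i := by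
    simp only [mem_disjiUnion, mem_univ, true_and]
  refine ⟨r, P, hP, fun i b hb => (mem_iff b).2 ⟨i, hb⟩, fun b hb => ?_⟩
  obtain ⟨i, hi⟩ := (mem_iff b).1 hb
  exact ⟨i, hi, fun j hj => hdisj.elim_finset (mem_univ j) (mem_univ i) b hj hi⟩

theorem mem_derivedBlocks {B : Finset (Finset ℕ)} {x : ℕ} {T : Finset ℕ} :
    T ∈ derivedBlocks B x ↔ x ∉ T ∧ insert x T ∈ B := by
  simp only [derivedBlocks, mem_image, mem_filter]
  constructor
  · rintro ⟨b, ⟨hb, hx⟩, rfl⟩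
    exact ⟨notMem_erase x b, by rwa [insert_erase hx]⟩
  · rintro ⟨hx, hT⟩
    exact ⟨insert x T, ⟨hT, mem_insert_self x T⟩, erase_insert hx⟩

theorem erase_mem_derivedBlocks {B : Finset (Finset ℕ)} {b : Finset ℕ} {x : ℕ} (hb : b ∈ B)
    (hx : x ∈ b) : b.erase x ∈ derivedBlocks B x :=
  mem_image_of_mem _ (mem_filter.2 ⟨hb, hx⟩)

theorem isSteiner_succ_of_derivedBlocks {t k v : ℕ} {X : Finset ℕ} {B : Finset (Finset ℕ)}
    {O : Set ℕ} (hOX : O ⊆ X) (hX : #X = v + 1)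
    (hO : ∀ x ∈ O, IsSteiner t k v (X.erase x) (derivedBlocks B x))
    (hB : ∀ b ∈ B, ∃ x ∈ b, x ∈ O) (hT : ∀ T ⊆ X, #T = t + 1 → ∃ x ∈ T, x ∈ O) :
    IsSteiner (t + 1) (k + 1) (v + 1) X B := by
  refine ⟨hX, fun b hb => ?_, fun T hTX hTcard => ?_⟩
  · obtain ⟨x, hxb, hxO⟩ := hB b hb
    obtain ⟨hsub, hcard⟩ := (hO x hxO).2.1 _ (erase_mem_derivedBlocks hb hxb)
    exact ⟨(erase_subset_iff_of_mem (hOX hxO)).1 (hsub.trans (erase_subset x X)),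
      by rw [← card_erase_add_one hxb, hcard]⟩
  · obtain ⟨x, hxT, hxO⟩ := hT T hTX hTcard
    obtain ⟨S, ⟨hS, hTS⟩, hSuniq⟩ := (hO x hxO).2.2 (T.erase x) (erase_subset_erase x hTX)
      (by rw [card_erase_of_mem hxT, hTcard, Nat.add_sub_cancel])
    refine ⟨insert x S, ⟨(mem_derivedBlocks.1 hS).2, subset_insert_iff.2 hTS⟩,
      fun b ⟨hb, hTb⟩ => ?_⟩
    have hxb : x ∈ b := hTb hxT
    have hbS : b.erase x = S :=
      hSuniq _ ⟨erase_mem_derivedBlocks hb hxb, erase_subset_erase x hTb⟩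
    rw [← hbS, insert_erase hxb]

section Action

variable {G : Type*} [AddGroup G] [AddAction G ℕ] {t k v x y : ℕ} {X Y : Finset ℕ}
  {B D E P : Finset (Finset ℕ)}

theorem vadd_finset_erase (g : G) (x : ℕ) (Y : Finset ℕ) :
    g +ᵥ Y.erase x = (g +ᵥ Y).erase (g +ᵥ x) :=
  image_erase (AddAction.injective g) Y x

theorem IsSteiner.vadd (g : G) (h : IsSteiner t k v Y B) : IsSteiner t k v (g +ᵥ Y) (g +ᵥ B) := by
  refine ⟨by rw [card_vadd_finset, h.1], fun b hb => ?_, fun T hTY hT => ?_⟩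
  · obtain ⟨c, hc, rfl⟩ := mem_vadd_finset.1 hb
    rw [vadd_finset_subset_vadd_finset_iff, card_vadd_finset]
    exact h.2.1 c hc
  · refine ((AddAction.toPerm g).existsUnique_congr fun b => ?_).1
      (h.2.2 (-g +ᵥ T) (subset_vadd_finset_iff.1 hTY) (by rwa [card_vadd_finset]))
    rw [AddAction.toPerm_apply, vadd_mem_vadd_finset_iff, subset_vadd_finset_iff]

theorem IsParallelClass.vadd (g : G) (h : IsParallelClass Y P) :
    IsParallelClass (g +ᵥ Y) (g +ᵥ P) := by
  refine ⟨fun b hb => ?_, fun y hy => ?_⟩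
  · obtain ⟨c, hc, rfl⟩ := mem_vadd_finset.1 hb
    exact vadd_finset_subset_vadd_finset (h.1 c hc)
  · refine ((AddAction.toPerm g).existsUnique_congr fun b => ?_).1
      (h.2 (-g +ᵥ y) (neg_vadd_mem_iff.2 hy))
    rw [AddAction.toPerm_apply, vadd_mem_vadd_finset_iff, neg_vadd_mem_iff]

theorem Resolvable.vadd (g : G) (h : Resolvable Y B) : Resolvable (g +ᵥ Y) (g +ᵥ B) := by
  obtain ⟨r, P, hP, hPB, huniq⟩ := h
  refine ⟨r, fun i => g +ᵥ P i, fun i => (hP i).vadd g,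
    fun i => vadd_finset_subset_vadd_finset (hPB i), fun b hb => ?_⟩
  obtain ⟨c, hc, rfl⟩ := mem_vadd_finset.1 hb
  simpa only [vadd_mem_vadd_finset_iff] using huniq c hc

theorem derivedBlocks_vadd (g : G) (B : Finset (Finset ℕ)) (x : ℕ) :
    derivedBlocks (g +ᵥ B) (g +ᵥ x) = g +ᵥ derivedBlocks B x := by
  ext T
  rw [← neg_vadd_mem_iff, mem_derivedBlocks, mem_derivedBlocks, ← neg_vadd_mem_iff,
    vadd_finset_insert, neg_vadd_vadd, ← vadd_mem_vadd_finset_iff (-g) (s := T), neg_vadd_vadd]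

theorem IsSteiner.derivedBlocks_of_mem_orbit (hX : ∀ g : G, g +ᵥ X = X) (hB : ∀ g : G, g +ᵥ B = B)
    (h : IsSteiner t k v (X.erase x) (derivedBlocks B x)) (hy : y ∈ AddAction.orbit G x) :
    IsSteiner t k v (X.erase y) (derivedBlocks B y) := by
  obtain ⟨g, rfl⟩ := hy
  simpa only [vadd_finset_erase, ← derivedBlocks_vadd, hX, hB] using h.vadd g

theorem Resolvable.derivedBlocks_of_mem_orbit (hX : ∀ g : G, g +ᵥ X = X)
    (hB : ∀ g : G, g +ᵥ B = B) (h : Resolvable (X.erase x) (derivedBlocks B x))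
    (hy : y ∈ AddAction.orbit G x) : Resolvable (X.erase y) (derivedBlocks B y) := by
  obtain ⟨g, rfl⟩ := hy
  simpa only [vadd_finset_erase, ← derivedBlocks_vadd, hX, hB] using h.vadd g

variable [Fintype G]

variable (G) in
/-- The development under `G` of a collection `D` of blocks of a prospective derived design at the
point `x`: all translates of the blocks `{x} ∪ T` with `T ∈ D`. -/
def development (x : ℕ) (D : Finset (Finset ℕ)) : Finset (Finset ℕ) :=
  (univ : Finset G) +ᵥ D.image (insert x)

theorem mem_development {b : Finset ℕ} :
    b ∈ development G x D ↔ ∃ g : G, ∃ T ∈ D, g +ᵥ insert x T = b := by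
  simp only [development, mem_vadd, mem_univ, true_and, exists_mem_image]

theorem vadd_development (g : G) : g +ᵥ development G x D = development G x D := by
  classical rw [development, ← vadd_assoc, vadd_finset_univ]

theorem exists_mem_orbit_of_mem_development {b : Finset ℕ} (hb : b ∈ development G x D) :
    ∃ y ∈ b, y ∈ AddAction.orbit G x := by
  obtain ⟨g, T, -, rfl⟩ := mem_development.1 hb
  exact ⟨g +ᵥ x, vadd_mem_vadd_finset (mem_insert_self x T), g, rfl⟩

theorem derivedBlocks_development
    (hE : ∀ T ∈ E, y ∉ T ∧ ∃ g : G, x ∈ g +ᵥ insert y T ∧ (g +ᵥ insert y T).erase x ∈ D)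
    (hD : ∀ g : G, ∀ T ∈ D, y ∈ g +ᵥ insert x T → (g +ᵥ insert x T).erase y ∈ E) :
    derivedBlocks (development G x D) y = E := by
  ext T
  rw [mem_derivedBlocks, mem_development]
  constructor
  · rintro ⟨hyT, g, S, hS, hST⟩
    simpa only [hST, mem_insert_self, erase_insert hyT, true_imp_iff] using hD g S hS
  · intro hT
    obtain ⟨hyT, g, hx, hmem⟩ := hE T hT
    exact ⟨hyT, -g, _, hmem, by rw [insert_erase hx, neg_vadd_vadd]⟩

theorem isSteiner_succ_development (hX : ∀ g : G, g +ᵥ X = X) (hx : x ∈ X)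
    (hder : IsSteiner t k v (X.erase x) (derivedBlocks (development G x D) x))
    (hT : ∀ T ⊆ X, #T = t + 1 → ∃ y ∈ T, y ∈ AddAction.orbit G x) :
    IsSteiner (t + 1) (k + 1) (v + 1) X (development G x D) := by
  have orbit_subset : AddAction.orbit G x ⊆ X := by
    rintro _ ⟨g, rfl⟩
    exact hX g ▸ vadd_mem_vadd_finset hx
  exact isSteiner_succ_of_derivedBlocks orbit_subset (by rw [← card_erase_add_one hx, hder.1])
    (fun y hy => hder.derivedBlocks_of_mem_orbit hX vadd_development hy)
    (fun b hb => exists_mem_orbit_of_mem_development hb) hT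

end Action

/-- Rotation by `a ∈ ℤ/n` of `{0, …, n - 1}`, extended to `ℕ` by fixing every `x ≥ n`; the fixed
point `n` plays the role of `∞`. -/
def rotate {n : ℕ} (a : ZMod n) (x : ℕ) : ℕ := if x < n then (x + a.val) % n else x

theorem rotate_of_lt {n x : ℕ} (a : ZMod n) (hx : x < n) : rotate a x = (x + a.val) % n :=
  if_pos hx

theorem rotate_of_le {n x : ℕ} (a : ZMod n) (hx : n ≤ x) : rotate a x = x := if_neg hx.not_gt

theorem rotate_zero {n : ℕ} (x : ℕ) : rotate (0 : ZMod n) x = x := by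
  obtain hx | hx := lt_or_ge x n
  · rw [rotate_of_lt 0 hx, ZMod.val_zero, add_zero, Nat.mod_eq_of_lt hx]
  · exact rotate_of_le 0 hx

theorem rotate_add {n : ℕ} [NeZero n] (a b : ZMod n) (x : ℕ) :
    rotate (a + b) x = rotate a (rotate b x) := by
  obtain hx | hx := lt_or_ge x n
  · rw [rotate_of_lt b hx, rotate_of_lt _ hx, rotate_of_lt a (Nat.mod_lt _ (NeZero.pos n)),
      ZMod.val_add, Nat.add_mod_mod, Nat.mod_add_mod, add_comm a.val, add_assoc]
  · rw [rotate_of_le b hx, rotate_of_le _ hx, rotate_of_le a hx]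

/-- The action of `ℤ/n` on `ℕ` by rotations of `{0, …, n - 1}`. -/
abbrev rotationAction {n : ℕ} [NeZero n] : AddAction (ZMod n) ℕ where
  vadd := rotate
  zero_vadd := rotate_zero
  add_vadd := rotate_add

attribute [local instance] rotationAction

theorem mem_orbit_zero_of_lt {n x : ℕ} [NeZero n] (hx : x < n) :
    x ∈ AddAction.orbit (ZMod n) 0 := by
  refine ⟨(x : ZMod n), ?_⟩
  change rotate (x : ZMod n) 0 = x
  rw [rotate_of_lt _ (NeZero.pos n), zero_add, ZMod.val_natCast_of_lt hx, Nat.mod_eq_of_lt hx]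

theorem vadd_range_of_le {n m : ℕ} [NeZero n] (hnm : n ≤ m) (a : ZMod n) :
    a +ᵥ range m = range m := by
  refine eq_of_subset_of_card_le (fun y hy => ?_) (card_vadd_finset a (range m)).ge
  obtain ⟨x, hx, rfl⟩ := mem_vadd_finset.1 hy
  change rotate a x ∈ range m
  obtain hxn | hxn := lt_or_ge x n
  · rw [rotate_of_lt a hxn, mem_range]
    exact (Nat.mod_lt _ (NeZero.pos n)).trans_le hnm
  · rwa [rotate_of_le a hxn]

theorem exists_mem_orbit_zero_of_subset_range {n : ℕ} [NeZero n] {T : Finset ℕ}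
    (hT : T ⊆ range (n + 1)) (hcard : 1 < #T) : ∃ x ∈ T, x ∈ AddAction.orbit (ZMod n) 0 := by
  obtain ⟨x, hxT, hxn⟩ := exists_mem_ne hcard n
  have hx := mem_range.1 (hT hxT)
  exact ⟨x, hxT, mem_orbit_zero_of_lt (by lia)⟩

/-- The ten parallel classes of the derived design at `0`. -/
def parallelClassesAtZero : Fin 10 → Finset (Finset ℕ) :=
  ![{{5, 8, 12}, {9, 10, 16}, {2, 3, 17}, {4, 13, 18}, {1, 15, 19}, {6, 11, 20}, {7, 14, 21}},
    {{2, 7, 9}, {6, 13, 14}, {1, 11, 16}, {5, 17, 18}, {4, 10, 19}, {3, 8, 20}, {12, 15, 21}},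
    {{1, 3, 6}, {4, 11, 14}, {8, 13, 17}, {15, 16, 18}, {5, 7, 19}, {9, 12, 20}, {2, 10, 21}},
    {{2, 6, 12}, {1, 10, 13}, {5, 14, 15}, {3, 7, 16}, {8, 9, 18}, {11, 17, 19}, {4, 20, 21}},
    {{3, 11, 12}, {5, 9, 13}, {1, 8, 14}, {2, 4, 15}, {7, 10, 17}, {16, 19, 20}, {6, 18, 21}},
    {{4, 6, 7}, {2, 8, 11}, {12, 13, 16}, {9, 14, 17}, {3, 18, 19}, {10, 15, 20}, {1, 5, 21}},
    {{3, 10, 14}, {9, 11, 15}, {5, 6, 16}, {4, 12, 17}, {1, 2, 18}, {7, 13, 20}, {8, 19, 21}},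
    {{5, 10, 11}, {1, 7, 12}, {4, 8, 16}, {6, 15, 17}, {2, 13, 19}, {14, 18, 20}, {3, 9, 21}},
    {{1, 4, 9}, {6, 8, 10}, {3, 13, 15}, {7, 11, 18}, {12, 14, 19}, {2, 5, 20}, {16, 17, 21}},
    {{3, 4, 5}, {7, 8, 15}, {2, 14, 16}, {10, 12, 18}, {6, 9, 19}, {1, 17, 20}, {11, 13, 21}}]

/-- The ten parallel classes of the derived design at `∞ = 21`. -/
def parallelClassesAtInfinity : Fin 10 → Finset (Finset ℕ) :=
  ![{{0, 7, 14}, {1, 8, 15}, {2, 9, 16}, {3, 10, 17}, {4, 11, 18}, {5, 12, 19}, {6, 13, 20}},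
    {{0, 1, 5}, {4, 7, 13}, {6, 9, 15}, {11, 12, 16}, {2, 14, 17}, {8, 10, 18}, {3, 19, 20}},
    {{3, 4, 8}, {5, 6, 10}, {1, 12, 14}, {2, 13, 15}, {0, 16, 17}, {9, 11, 19}, {7, 18, 20}},
    {{1, 2, 6}, {3, 5, 13}, {7, 10, 16}, {8, 11, 17}, {9, 12, 18}, {14, 15, 19}, {0, 4, 20}},
    {{3, 6, 12}, {0, 11, 13}, {9, 10, 14}, {5, 7, 15}, {1, 17, 18}, {4, 16, 19}, {2, 8, 20}},
    {{2, 3, 7}, {4, 6, 14}, {10, 11, 15}, {12, 13, 17}, {5, 16, 18}, {0, 8, 19}, {1, 9, 20}},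
    {{1, 3, 11}, {2, 4, 12}, {5, 8, 14}, {7, 9, 17}, {0, 6, 18}, {10, 13, 19}, {15, 16, 20}},
    {{0, 3, 9}, {2, 5, 11}, {6, 8, 16}, {4, 15, 17}, {13, 14, 18}, {1, 7, 19}, {10, 12, 20}},
    {{1, 4, 10}, {6, 7, 11}, {8, 9, 13}, {0, 12, 15}, {3, 14, 16}, {2, 18, 19}, {5, 17, 20}},
    {{4, 5, 9}, {0, 2, 10}, {7, 8, 12}, {1, 13, 16}, {3, 15, 18}, {6, 17, 19}, {11, 14, 20}}]

theorem pairwiseDisjoint_parallelClassesAtZero :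
    ((univ : Finset (Fin 10)) : Set (Fin 10)).PairwiseDisjoint parallelClassesAtZero := by
  have disjoint_of_ne : ∀ i j, i ≠ j →
      Disjoint (parallelClassesAtZero i) (parallelClassesAtZero j) := by decide +kernel
  exact fun i _ j _ => disjoint_of_ne i j

theorem pairwiseDisjoint_parallelClassesAtInfinity :
    ((univ : Finset (Fin 10)) : Set (Fin 10)).PairwiseDisjoint parallelClassesAtInfinity := by
  have disjoint_of_ne : ∀ i j, i ≠ j →
      Disjoint (parallelClassesAtInfinity i) (parallelClassesAtInfinity j) := by decide +kernel
  exact fun i _ j _ => disjoint_of_ne i j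

/-- The blocks of the derived design at `0`. A disjoint union, unlike `Finset.biUnion`, evaluates
without removing duplicates, which keeps the finite checks below cheap. -/
def triplesAtZero : Finset (Finset ℕ) :=
  univ.disjiUnion parallelClassesAtZero pairwiseDisjoint_parallelClassesAtZero

/-- The blocks of the derived design at `∞ = 21`. -/
def triplesAtInfinity : Finset (Finset ℕ) :=
  univ.disjiUnion parallelClassesAtInfinity pairwiseDisjoint_parallelClassesAtInfinity

/-- The blocks of the quadruple system, on the points `{0, …, 20} ∪ {∞}` with `∞ = 21`. -/
def quadruples : Finset (Finset ℕ) := development (ZMod 21) 0 triplesAtZero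

theorem vadd_range_twentyTwo (a : ZMod 21) : a +ᵥ range 22 = range 22 :=
  vadd_range_of_le (Nat.le_succ 21) a

theorem vadd_quadruples (a : ZMod 21) : a +ᵥ quadruples = quadruples := vadd_development a

theorem isKTS_triplesAtZero : IsKTS 21 ((range 22).erase 0) triplesAtZero :=
  ⟨isSteiner_iff_card_filter.2 (by decide +kernel),
    resolvable_disjiUnion (by simp only [isParallelClass_iff_card_filter]; decide +kernel) _⟩

theorem resolvable_triplesAtInfinity : Resolvable ((range 22).erase 21) triplesAtInfinity :=
  resolvable_disjiUnion (by simp only [isParallelClass_iff_card_filter]; decide +kernel) _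

theorem erase_zero_vadd_mem_triplesAtZero :
    ∀ a : ZMod 21, ∀ T ∈ triplesAtZero, 0 ∈ a +ᵥ insert 0 T →
      (a +ᵥ insert 0 T).erase 0 ∈ triplesAtZero := by
  decide +kernel

theorem derivedBlocks_quadruples_zero : derivedBlocks quadruples 0 = triplesAtZero := by
  refine derivedBlocks_development (fun T hT => ?_) erase_zero_vadd_mem_triplesAtZero
  have zero_notMem : 0 ∉ T := fun h => notMem_erase 0 _ ((isKTS_triplesAtZero.1.2.1 T hT).1 h)
  refine ⟨zero_notMem, 0, ?_⟩
  rw [zero_vadd, erase_insert zero_notMem]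
  exact ⟨mem_insert_self 0 T, hT⟩

theorem exists_erase_zero_vadd_mem_triplesAtZero :
    ∀ T ∈ triplesAtInfinity, 21 ∉ T ∧ ∃ a : ZMod 21, 0 ∈ a +ᵥ insert 21 T ∧
      (a +ᵥ insert 21 T).erase 0 ∈ triplesAtZero := by
  decide +kernel

theorem erase_infinity_vadd_mem_triplesAtInfinity :
    ∀ a : ZMod 21, ∀ T ∈ triplesAtZero, 21 ∈ a +ᵥ insert 0 T →
      (a +ᵥ insert 0 T).erase 21 ∈ triplesAtInfinity := by
  decide +kernel

theorem derivedBlocks_quadruples_infinity : derivedBlocks quadruples 21 = triplesAtInfinity :=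
  derivedBlocks_development exists_erase_zero_vadd_mem_triplesAtZero
    erase_infinity_vadd_mem_triplesAtInfinity

theorem isSteiner_quadruples : IsSteiner 3 4 22 (range 22) quadruples := by
  have isSteiner_zero : IsSteiner 2 3 21 ((range 22).erase 0) (derivedBlocks quadruples 0) := by
    rw [derivedBlocks_quadruples_zero]
    exact isKTS_triplesAtZero.1
  exact isSteiner_succ_development vadd_range_twentyTwo
    (mem_range.2 (by norm_num)) isSteiner_zero
    fun _ hT hcard => exists_mem_orbit_zero_of_subset_range hT (by lia)

theorem resolvable_derivedBlocks_quadruples {x : ℕ} (hx : x < 22) :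
    Resolvable ((range 22).erase x) (derivedBlocks quadruples x) := by
  obtain hlt | rfl : x < 21 ∨ x = 21 := by lia
  · have resolvable_zero : Resolvable ((range 22).erase 0) (derivedBlocks quadruples 0) := by
      rw [derivedBlocks_quadruples_zero]
      exact isKTS_triplesAtZero.2
    exact resolvable_zero.derivedBlocks_of_mem_orbit vadd_range_twentyTwo
      vadd_quadruples (mem_orbit_zero_of_lt hlt)
  · rw [derivedBlocks_quadruples_infinity]
    exact resolvable_triplesAtInfinity

/-- There exists an RDSQS(22). -/
theorem stmt_5 : ExistsRDSQS 22 := by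
  refine ⟨range 22, quadruples, isSteiner_quadruples, fun x hx => ?_⟩
  exact resolvable_derivedBlocks_quadruples (mem_range.1 hx)
end

section
/- For every prime power q and every positive integer n, there exists an RDS(3, q + 1, q^n + 1), i.e., a Steiner system S(3, q + 1, q^n + 1) whose derived design at every point is resolvable. -/
open Finset

/-!
`GL₂(K)` acts on the projective line `OnePoint K` transitively on triples of distinct points, and
only scalars fix the frame `(∞, 0, 1)`. Every triple contained in the projective line over a
subfield `F` is the image of the frame under `GL₂(F)`, so a translate of that subline containing the
frame is the subline itself: the translates form a Steiner system with `t = 3`. The blocks through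
`∞` are the `F`-affine lines of `K` completed by `∞`, so parallelism resolves the derived design
at `∞`, and transitivity carries this resolution to every other point.
-/

open scoped Pointwise OnePoint MatrixGroups

section Families

variable {α ι : Type*}

/-- The defining property of a Steiner system on a type `α`: any `t` distinct points, given as an
embedding of `Fin t`, lie on exactly one block of `𝓑`. The block size is not part of the notion. -/
def IsSteinerFamily (t : ℕ) (𝓑 : Set (Set α)) : Prop :=
  ∀ x : Fin t ↪ α, ∃! b, b ∈ 𝓑 ∧ Set.range x ⊆ b

/-- A parallelism on the blocks through `x`, given by a colouring `c` whose colour classes are the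
directions: it satisfies Playfair's axiom, so that deleting `x` turns its colour classes into
parallel classes of the derived design at `x`. -/
def IsParallelismAt (𝓑 : Set (Set α)) (x : α) (c : Set α → ι) : Prop :=
  ∀ d ∈ 𝓑, x ∈ d → ∀ y ≠ x, ∃! b, (b ∈ 𝓑 ∧ x ∈ b ∧ c b = c d) ∧ y ∈ b

lemma resolvable_of_coloring {Y : Finset ℕ} {B : Finset (Finset ℕ)} (c : Finset ℕ → ι)
    (hsub : ∀ b ∈ B, b ⊆ Y)
    (hc : ∀ d ∈ B, ∀ y ∈ Y, ∃! b, (b ∈ B ∧ c b = c d) ∧ y ∈ b) : Resolvable Y B := by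
  classical
  let e := (B.image c).equivFin
  refine ⟨_, fun i => {b ∈ B | c b = e.symm i}, fun i => ⟨fun b hb => ?_, ?_⟩,
    fun i => filter_subset _ _, fun b hb => ⟨e ⟨c b, mem_image_of_mem c hb⟩, ?_, ?_⟩⟩
  · exact hsub b (mem_filter.1 hb).1
  · obtain ⟨d, hd, hdi⟩ := mem_image.1 (e.symm i).2
    simpa only [mem_filter, ← hdi] using hc d hd
  · simp [hb]
  · intro i hi
    rw [← Equiv.symm_apply_eq]
    exact Subtype.ext (mem_filter.1 hi).2.symm

end Families

section Encoding

variable {α β ι : Type*} [Finite α]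

/-- The image of a set under a map out of a finite type, as a finset. It carries blocks on a finite
type to blocks on `ℕ` and, applied to itself, families of blocks to families of blocks. -/
noncomputable def finsetImage (f : α → β) (s : Set α) : Finset β :=
  (f '' s).toFinite.toFinset

lemma mem_finsetImage {f : α → β} {s : Set α} {y : β} :
    y ∈ finsetImage f s ↔ ∃ a ∈ s, f a = y := by
  simp [finsetImage]

lemma coe_finsetImage (f : α → β) (s : Set α) : (finsetImage f s : Set β) = f '' s := by
  simp [finsetImage]

lemma finsetImage_subset_univ (f : α → β) (s : Set α) :
    finsetImage f s ⊆ finsetImage f Set.univ := by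
  simpa only [← Finset.coe_subset, coe_finsetImage] using Set.image_mono s.subset_univ

lemma apply_mem_finsetImage {f : α → β} (hf : f.Injective) {s : Set α} {a : α} :
    f a ∈ finsetImage f s ↔ a ∈ s := by
  simp [mem_finsetImage, hf.eq_iff]

lemma card_finsetImage {f : α → β} (hf : f.Injective) (s : Set α) :
    (finsetImage f s).card = s.ncard := by
  rw [← Set.ncard_coe_finset, coe_finsetImage, Set.ncard_image_of_injective s hf]

lemma preimage_insert_erase_finsetImage [DecidableEq β] {f : α → β} (hf : f.Injective) {s : Set α}
    {a : α} (ha : a ∈ s) :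
    f ⁻¹' (insert (f a) ((finsetImage f s).erase (f a)) : Finset β) = s := by
  rw [Finset.insert_erase ((apply_mem_finsetImage hf).2 ha), coe_finsetImage,
    Set.preimage_image_eq s hf]

lemma exists_embedding_image_range_eq {f : α → β} {T : Finset β}
    (hT : T ⊆ finsetImage f Set.univ) : ∃ x : Fin T.card ↪ α, f '' Set.range x = T := by
  have exists_apply_eq (i : Fin T.card) : ∃ a, f a = T.equivFin.symm i := by
    simpa [mem_finsetImage] using hT (T.equivFin.symm i).2
  choose x hx using exists_apply_eq
  have hfx : f ∘ x = Subtype.val ∘ T.equivFin.symm := funext hx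
  have hfx_injective : (f ∘ x).Injective :=
    hfx ▸ Subtype.val_injective.comp T.equivFin.symm.injective
  refine ⟨⟨x, hfx_injective.of_comp⟩, ?_⟩
  change f '' Set.range x = T
  rw [← Set.range_comp, hfx, EquivLike.range_comp, Subtype.range_coe]

lemma IsSteinerFamily.isSteiner {t k : ℕ} {𝓑 : Set (Set α)} (h𝓑 : IsSteinerFamily t 𝓑)
    (hk : ∀ b ∈ 𝓑, b.ncard = k) {f : α → ℕ} (hf : f.Injective) :
    IsSteiner t k (Nat.card α) (finsetImage f Set.univ) (finsetImage (finsetImage f) 𝓑) := by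
  refine ⟨by rw [card_finsetImage hf, Set.ncard_univ], fun b hb => ?_, fun T hT hTt => ?_⟩
  · obtain ⟨b, hb𝓑, rfl⟩ := mem_finsetImage.1 hb
    exact ⟨finsetImage_subset_univ f b, by rw [card_finsetImage hf, hk b hb𝓑]⟩
  · obtain ⟨x, hx⟩ := exists_embedding_image_range_eq hT
    subst hTt
    have subset_iff (b : Set α) : T ⊆ finsetImage f b ↔ Set.range x ⊆ b := by
      rw [← Finset.coe_subset, coe_finsetImage, ← hx, Set.image_subset_image_iff hf]
    obtain ⟨b, ⟨hb, hxb⟩, hunique⟩ := h𝓑 x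
    refine ⟨finsetImage f b, ⟨mem_finsetImage.2 ⟨b, hb, rfl⟩, (subset_iff b).2 hxb⟩, ?_⟩
    rintro _ ⟨hc', hTc⟩
    obtain ⟨c, hc, rfl⟩ := mem_finsetImage.1 hc'
    rw [hunique c ⟨hc, (subset_iff c).1 hTc⟩]

lemma mem_derivedBlocks_finsetImage {f : α → ℕ} (hf : f.Injective) {𝓑 : Set (Set α)} {x : α}
    {s : Finset ℕ} :
    s ∈ derivedBlocks (finsetImage (finsetImage f) 𝓑) (f x) ↔
      ∃ b ∈ 𝓑, x ∈ b ∧ (finsetImage f b).erase (f x) = s := by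
  constructor
  · intro hs
    obtain ⟨b', hb', rfl⟩ := mem_image.1 hs
    obtain ⟨hb', hxb⟩ := mem_filter.1 hb'
    obtain ⟨b, hb, rfl⟩ := mem_finsetImage.1 hb'
    exact ⟨b, hb, (apply_mem_finsetImage hf).1 hxb, rfl⟩
  · rintro ⟨b, hb, hxb, rfl⟩
    exact mem_image_of_mem _ <| mem_filter.2
      ⟨mem_finsetImage.2 ⟨b, hb, rfl⟩, (apply_mem_finsetImage hf).2 hxb⟩

lemma IsParallelismAt.resolvable {𝓑 : Set (Set α)} {x : α} {c : Set α → ι}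
    (hc : IsParallelismAt 𝓑 x c) {f : α → ℕ} (hf : f.Injective) :
    Resolvable ((finsetImage f Set.univ).erase (f x))
      (derivedBlocks (finsetImage (finsetImage f) 𝓑) (f x)) := by
  refine resolvable_of_coloring (fun s => c (f ⁻¹' (insert (f x) s : Finset ℕ))) ?_ ?_
  · intro s hs
    obtain ⟨b, -, -, rfl⟩ := (mem_derivedBlocks_finsetImage hf).1 hs
    exact erase_subset_erase _ (finsetImage_subset_univ f b)
  · intro s hs n hn
    obtain ⟨d, hd, hxd, rfl⟩ := (mem_derivedBlocks_finsetImage hf).1 hs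
    obtain ⟨hnx, hn⟩ := mem_erase.1 hn
    obtain ⟨y, -, rfl⟩ := mem_finsetImage.1 hn
    obtain ⟨b, ⟨⟨hb, hxb, hbd⟩, hyb⟩, hunique⟩ := hc d hd hxd y (ne_of_apply_ne f hnx)
    refine ⟨(finsetImage f b).erase (f x), ⟨⟨?_, ?_⟩, ?_⟩, ?_⟩
    · exact (mem_derivedBlocks_finsetImage hf).2 ⟨b, hb, hxb, rfl⟩
    · simpa only [preimage_insert_erase_finsetImage hf, hxb, hxd] using hbd
    · exact mem_erase.2 ⟨hnx, (apply_mem_finsetImage hf).2 hyb⟩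
    · rintro _ ⟨⟨hs', hcolor⟩, hys'⟩
      obtain ⟨b', hb', hxb', rfl⟩ := (mem_derivedBlocks_finsetImage hf).1 hs'
      simp only [preimage_insert_erase_finsetImage hf, hxb', hxd] at hcolor
      rw [hunique b' ⟨⟨hb', hxb', hcolor⟩, (apply_mem_finsetImage hf).1 (mem_of_mem_erase hys')⟩]

theorem existsRDS_of_isSteinerFamily {t k : ℕ} {𝓑 : Set (Set α)} (h𝓑 : IsSteinerFamily t 𝓑)
    (hk : ∀ b ∈ 𝓑, b.ncard = k) (c : α → Set α → ι) (hc : ∀ x, IsParallelismAt 𝓑 x (c x)) :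
    ExistsRDS t k (Nat.card α) := by
  obtain ⟨f, hf⟩ := exists_injective_nat α
  refine ⟨_, _, h𝓑.isSteiner hk hf, fun n hn => ?_⟩
  obtain ⟨x, -, rfl⟩ := mem_finsetImage.1 hn
  exact (hc x).resolvable hf

end Encoding

section GroupAction

variable {G α ι : Type*} [Group G] [MulAction G α]

lemma range_smul_embedding {β : Type*} (g : G) (x : β ↪ α) :
    Set.range (g • x) = g • Set.range x :=
  Set.range_comp (g • ·) x

lemma isSteinerFamily_orbit {t : ℕ} [MulAction.IsMultiplyPretransitive G α t] {b₀ : Set α}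
    {x₀ : Fin t ↪ α} (hx₀ : Set.range x₀ ⊆ b₀)
    (hb₀ : ∀ g : G, Set.range x₀ ⊆ g • b₀ → g • b₀ = b₀) :
    IsSteinerFamily t (MulAction.orbit G b₀) := by
  intro x
  obtain ⟨g, rfl⟩ := MulAction.exists_smul_eq G x₀ x
  refine ⟨g • b₀, ⟨⟨g, rfl⟩, range_smul_embedding g x₀ ▸ Set.smul_set_mono hx₀⟩, ?_⟩
  rintro _ ⟨⟨h, rfl⟩, hx⟩
  have hx₀h : Set.range x₀ ⊆ (g⁻¹ * h) • b₀ := by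
    rwa [mul_smul, ← Set.smul_set_subset_iff_subset_inv_smul_set, ← range_smul_embedding]
  simpa only [mul_smul, inv_smul_eq_iff] using hb₀ _ hx₀h

lemma IsParallelismAt.smul {𝓑 : Set (Set α)} (h𝓑 : ∀ g : G, ∀ b ∈ 𝓑, g • b ∈ 𝓑) {x : α}
    {c : Set α → ι} (hc : IsParallelismAt 𝓑 x c) (g : G) :
    IsParallelismAt 𝓑 (g • x) fun b => c (g⁻¹ • b) := by
  intro d hd hxd y hy
  obtain ⟨b, ⟨⟨hb, hxb, hbd⟩, hyb⟩, hunique⟩ := hc (g⁻¹ • d) (h𝓑 _ d hd)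
    (Set.mem_inv_smul_set_iff.2 hxd) (g⁻¹ • y) (by rwa [Ne, inv_smul_eq_iff])
  refine ⟨g • b, ⟨⟨h𝓑 g b hb, Set.smul_mem_smul_set hxb, ?_⟩, ?_⟩, ?_⟩
  · simpa only [inv_smul_smul] using hbd
  · exact Set.mem_smul_set_iff_inv_smul_mem.2 hyb
  · rintro b' ⟨⟨hb', hxb', hb'd⟩, hyb'⟩
    rw [← inv_smul_eq_iff]
    exact hunique _ ⟨⟨h𝓑 _ b' hb', Set.mem_inv_smul_set_iff.2 hxb', hb'd⟩,
      Set.smul_mem_smul_set hyb'⟩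

end GroupAction


section Moebius

variable {K : Type*} [Field K] [DecidableEq K]

/-- The Möbius transformation `x ↦ a * x + t` of the projective line, fixing `∞`. -/
def affineGL {a : K} (ha : a ≠ 0) (t : K) : GL (Fin 2) K :=
  Matrix.GeneralLinearGroup.mkOfDetNeZero !![a, t; 0, 1] (by simpa [Matrix.det_fin_two_of] using ha)

lemma affineGL_smul_infty {a : K} (ha : a ≠ 0) (t : K) : affineGL ha t • (∞ : OnePoint K) = ∞ := by
  simp [OnePoint.smul_infty_eq_self_iff, affineGL, Matrix.GeneralLinearGroup.mkOfDetNeZero]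

lemma affineGL_smul_coe {a : K} (ha : a ≠ 0) (t x : K) :
    affineGL ha t • (x : OnePoint K) = ↑(a * x + t) := by
  simp [OnePoint.smul_some_eq_ite, affineGL, Matrix.GeneralLinearGroup.mkOfDetNeZero]

lemma exists_smul_eq_affineGL_smul {g : GL (Fin 2) K} (hg : g • (∞ : OnePoint K) = ∞) :
    ∃ (a : K) (ha : a ≠ 0) (t : K), ∀ z : OnePoint K, g • z = affineGL ha t • z := by
  have h10 : g 1 0 = 0 := OnePoint.smul_infty_eq_self_iff.1 hg
  have hdet : g 0 0 * g 1 1 ≠ 0 := by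
    simpa [Matrix.det_fin_two, h10] using g.det_ne_zero
  obtain ⟨h00, h11⟩ := mul_ne_zero_iff.1 hdet
  refine ⟨g 0 0 / g 1 1, div_ne_zero h00 h11, g 0 1 / g 1 1, fun z => ?_⟩
  cases z with
  | infty => rw [hg, affineGL_smul_infty]
  | coe x =>
    rw [affineGL_smul_coe, OnePoint.smul_some_eq_ite, h10, zero_mul, zero_add, if_neg h11,
      add_div, mul_div_right_comm]

instance isPretransitive_onePoint : MulAction.IsPretransitive (GL (Fin 2) K) (OnePoint K) := by
  refine MulAction.isPretransitive_iff_base (∞ : OnePoint K) |>.2 fun z => ?_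
  cases z with
  | infty => exact ⟨1, one_smul _ _⟩
  | coe x =>
    refine ⟨Matrix.GeneralLinearGroup.mkOfDetNeZero !![x, 1; 1, 0] (by simp), ?_⟩
    simp [OnePoint.smul_infty_eq_ite, Matrix.GeneralLinearGroup.mkOfDetNeZero]

variable (K) in
/-- The standard projective frame `(∞, 0, 1)` of the projective line. -/
def stdFrame : Fin 3 ↪ OnePoint K where
  toFun := ![∞, (0 : K), (1 : K)]
  inj' i j := by fin_cases i <;> fin_cases j <;> simp

lemma smul_stdFrame_eq_iff {g : GL (Fin 2) K} {x : Fin 3 ↪ OnePoint K} :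
    g • stdFrame K = x ↔ g • (∞ : OnePoint K) = x 0 ∧ g • ((0 : K) : OnePoint K) = x 1 ∧
      g • ((1 : K) : OnePoint K) = x 2 := by
  simp only [DFunLike.ext_iff, Fin.forall_fin_succ, IsEmpty.forall_iff, and_true]
  rfl

lemma exists_smul_stdFrame_eq (x : Fin 3 ↪ OnePoint K) :
    ∃ g : GL (Fin 2) K, g • stdFrame K = x := by
  obtain ⟨h, hh⟩ := MulAction.exists_smul_eq (GL (Fin 2) K) (∞ : OnePoint K) (x 0)
  have exists_coe {i : Fin 3} (hi : i ≠ 0) : ∃ y : K, (y : OnePoint K) = h⁻¹ • x i := by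
    rw [← OnePoint.ne_infty_iff_exists, Ne, inv_smul_eq_iff, hh]
    exact x.injective.ne hi
  obtain ⟨u, hu⟩ := exists_coe (i := 1) (by decide)
  obtain ⟨v, hv⟩ := exists_coe (i := 2) (by decide)
  have hvu : v - u ≠ 0 := by
    refine sub_ne_zero.2 fun huv => x.injective.ne (show (1 : Fin 3) ≠ 2 by decide) ?_
    rw [← smul_left_cancel_iff h⁻¹, ← hu, ← hv, huv]
  refine ⟨h * affineGL hvu u, smul_stdFrame_eq_iff.2 ⟨?_, ?_, ?_⟩⟩
  · rw [mul_smul, affineGL_smul_infty, hh]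
  · rw [mul_smul, affineGL_smul_coe, mul_zero, zero_add, hu, smul_inv_smul]
  · rw [mul_smul, affineGL_smul_coe, mul_one, sub_add_cancel, hv, smul_inv_smul]

instance isMultiplyPretransitive_onePoint :
    MulAction.IsMultiplyPretransitive (GL (Fin 2) K) (OnePoint K) 3 :=
  MulAction.isPretransitive_iff_base (stdFrame K) |>.2 exists_smul_stdFrame_eq

lemma smul_eq_self_of_smul_stdFrame_eq {g : GL (Fin 2) K} (hg : g • stdFrame K = stdFrame K)
    (z : OnePoint K) : g • z = z := by
  obtain ⟨hinfty, hzero, hone⟩ := smul_stdFrame_eq_iff.1 hg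
  obtain ⟨a, ha, t, hgat⟩ := exists_smul_eq_affineGL_smul hinfty
  rw [hgat, affineGL_smul_coe, mul_zero, zero_add] at hzero
  have ht : t = 0 := OnePoint.coe_injective hzero
  rw [hgat, affineGL_smul_coe, mul_one, ht, add_zero] at hone
  have ha1 : a = 1 := OnePoint.coe_injective hone
  cases z with
  | infty => exact hinfty
  | coe x => rw [hgat, affineGL_smul_coe, ha1, ht, one_mul, add_zero]

end Moebius

section Sublines

variable (F K : Type*) [Field F] [Field K] [Algebra F K]

/-- The projective line over `F` inside the projective line over `K`: the base block. -/
def baseSubline : Set (OnePoint K) :=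
  Set.range (OnePoint.map (algebraMap F K))

lemma infty_mem_baseSubline : ∞ ∈ baseSubline F K := ⟨∞, rfl⟩

lemma map_algebraMap_injective : (OnePoint.map (algebraMap F K)).Injective :=
  Option.map_injective (algebraMap F K).injective

lemma ncard_baseSubline [Finite F] : (baseSubline F K).ncard = Nat.card F + 1 := by
  rw [baseSubline, ← Nat.card_coe_set_eq,
    Nat.card_range_of_injective (map_algebraMap_injective F K)]
  exact Finite.card_option

lemma map_algebraMap_stdFrame (i : Fin 3) :
    OnePoint.map (algebraMap F K) (stdFrame F i) = stdFrame K i := by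
  fin_cases i
  · rfl
  · exact congrArg _ (map_zero (algebraMap F K))
  · exact congrArg _ (map_one (algebraMap F K))

lemma range_stdFrame_subset_baseSubline : Set.range (stdFrame K) ⊆ baseSubline F K := by
  rintro _ ⟨i, rfl⟩
  exact ⟨stdFrame F i, map_algebraMap_stdFrame F K i⟩

variable [DecidableEq K]

/-- The blocks: all images of the projective line over `F` under the projectivities of the
projective line over `K`. -/
def sublines : Set (Set (OnePoint K)) :=
  MulAction.orbit (GL (Fin 2) K) (baseSubline F K)

variable {F K}

lemma smul_mem_sublines (g : GL (Fin 2) K) {b : Set (OnePoint K)} (hb : b ∈ sublines F K) :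
    g • b ∈ sublines F K :=
  MulAction.mem_orbit_of_mem_orbit g hb

lemma ncard_of_mem_sublines [Finite F] {b : Set (OnePoint K)} (hb : b ∈ sublines F K) :
    b.ncard = Nat.card F + 1 := by
  obtain ⟨g, rfl⟩ := hb
  rw [← ncard_baseSubline F K]
  exact Set.ncard_smul_set g _

lemma map_smul_baseSubline (m : GL (Fin 2) F) :
    m.map (algebraMap F K) • baseSubline F K = baseSubline F K := by
  classical
  have smul_comp : (m.map (algebraMap F K) • ·) ∘ OnePoint.map (algebraMap F K) =
      OnePoint.map (algebraMap F K) ∘ (m • ·) :=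
    funext fun z => (OnePoint.map_smul (algebraMap F K) m z).symm
  rw [baseSubline, ← Set.image_smul, ← Set.range_comp, smul_comp,
    (MulAction.surjective m).range_comp]

lemma exists_map_smul_stdFrame_eq {x : Fin 3 ↪ OnePoint K}
    (hx : Set.range x ⊆ baseSubline F K) :
    ∃ m : GL (Fin 2) F, m.map (algebraMap F K) • stdFrame K = x := by
  classical
  choose y hy using fun i => hx (Set.mem_range_self i)
  have hy_injective : y.Injective := fun i j hij => x.injective (by rw [← hy, ← hy, hij])
  obtain ⟨m, hm⟩ := exists_smul_stdFrame_eq ⟨y, hy_injective⟩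
  refine ⟨m, DFunLike.ext _ _ fun i => ?_⟩
  calc m.map (algebraMap F K) • stdFrame K i
      = OnePoint.map (algebraMap F K) (m • stdFrame F i) := by
        rw [OnePoint.map_smul, map_algebraMap_stdFrame]
    _ = OnePoint.map (algebraMap F K) (y i) := congrArg _ (DFunLike.congr_fun hm i)
    _ = x i := hy i

lemma smul_baseSubline_eq_of_range_stdFrame_subset {g : GL (Fin 2) K}
    (hg : Set.range (stdFrame K) ⊆ g • baseSubline F K) :
    g • baseSubline F K = baseSubline F K := by
  have hrange : Set.range (g⁻¹ • stdFrame K) ⊆ baseSubline F K := by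
    rwa [range_smul_embedding, Set.smul_set_subset_iff_subset_inv_smul_set, inv_inv]
  obtain ⟨m, hm⟩ := exists_map_smul_stdFrame_eq hrange
  have hgm : (g * m.map (algebraMap F K)) • stdFrame K = stdFrame K := by
    rw [mul_smul, hm, smul_inv_smul]
  calc g • baseSubline F K
      = (g * m.map (algebraMap F K)) • baseSubline F K := by rw [mul_smul, map_smul_baseSubline]
    _ = baseSubline F K :=
      (Set.image_congr fun z _ => smul_eq_self_of_smul_stdFrame_eq hgm z).trans (Set.image_id _)

theorem isSteinerFamily_sublines : IsSteinerFamily 3 (sublines F K) :=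
  isSteinerFamily_orbit (range_stdFrame_subset_baseSubline F K) fun _ =>
    smul_baseSubline_eq_of_range_stdFrame_subset

end Sublines

section Directions

variable {F K : Type*} [Field F] [Field K] [Algebra F K]

variable (F) in
/-- The direction of the `F`-affine span of the finite points of a block. On blocks through `∞`,
which are the `F`-affine lines of `K` completed by `∞`, this is the usual direction of the line. -/
noncomputable def direction (b : Set (OnePoint K)) : Submodule F K :=
  vectorSpan F ((↑) ⁻¹' b : Set K)

variable [DecidableEq K]

lemma coe_preimage_affineGL_smul_baseSubline {a : K} (ha : a ≠ 0) (t : K) :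
    (↑) ⁻¹' (affineGL ha t • baseSubline F K) =
      (AffineSubspace.mk' t (Submodule.span F {a}) : Set K) := by
  ext x
  simp only [baseSubline, Set.mem_preimage, Set.mem_smul_set, Set.exists_range_iff,
    OnePoint.exists, OnePoint.map_infty, OnePoint.map_some, affineGL_smul_infty,
    affineGL_smul_coe, OnePoint.infty_ne_coe, false_or, OnePoint.coe_eq_coe, SetLike.mem_coe,
    AffineSubspace.mem_mk', Submodule.mem_span_singleton, vsub_eq_sub, eq_sub_iff_add_eq,
    Algebra.smul_def, mul_comm a]

lemma infty_mem_affineGL_smul_baseSubline {a : K} (ha : a ≠ 0) (t : K) :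
    ∞ ∈ affineGL ha t • baseSubline F K :=
  ⟨∞, infty_mem_baseSubline F K, affineGL_smul_infty ha t⟩

lemma coe_mem_affineGL_smul_baseSubline {a : K} (ha : a ≠ 0) (t x : K) :
    (x : OnePoint K) ∈ affineGL ha t • baseSubline F K ↔
      x ∈ AffineSubspace.mk' t (Submodule.span F {a}) :=
  Set.ext_iff.1 (coe_preimage_affineGL_smul_baseSubline ha t) x

lemma direction_affineGL_smul_baseSubline {a : K} (ha : a ≠ 0) (t : K) :
    direction F (affineGL ha t • baseSubline F K) = Submodule.span F {a} := by
  rw [direction, coe_preimage_affineGL_smul_baseSubline]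
  exact AffineSubspace.direction_mk' t _

lemma affineGL_smul_baseSubline_congr {a a' : K} (ha : a ≠ 0) (ha' : a' ≠ 0) {t t' : K}
    (h : AffineSubspace.mk' t (Submodule.span F {a}) =
      AffineSubspace.mk' t' (Submodule.span F {a'})) :
    affineGL ha t • baseSubline F K = affineGL ha' t' • baseSubline F K := by
  ext z
  cases z with
  | infty => simp only [infty_mem_affineGL_smul_baseSubline]
  | coe x => simp only [coe_mem_affineGL_smul_baseSubline, h]

lemma exists_eq_affineGL_smul_baseSubline {b : Set (OnePoint K)} (hb : b ∈ sublines F K)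
    (hinfty : ∞ ∈ b) : ∃ (a : K) (ha : a ≠ 0) (t : K), b = affineGL ha t • baseSubline F K := by
  classical
  obtain ⟨g, rfl⟩ := hb
  obtain ⟨_, ⟨z, rfl⟩, hz⟩ := hinfty
  obtain ⟨m, rfl⟩ := MulAction.exists_smul_eq (GL (Fin 2) F) (∞ : OnePoint F) z
  have hgm : (g * m.map (algebraMap F K)) • (∞ : OnePoint K) = ∞ := by
    rw [OnePoint.map_smul] at hz
    rw [mul_smul]
    exact hz
  obtain ⟨a, ha, t, hat⟩ := exists_smul_eq_affineGL_smul hgm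
  refine ⟨a, ha, t, ?_⟩
  calc g • baseSubline F K
      = (g * m.map (algebraMap F K)) • baseSubline F K := by rw [mul_smul, map_smul_baseSubline]
    _ = affineGL ha t • baseSubline F K := Set.image_congr fun z _ => hat z

theorem isParallelismAt_infty : IsParallelismAt (sublines F K) ∞ (direction F) := by
  intro d hd hinfty y hy
  obtain ⟨u, rfl⟩ := OnePoint.ne_infty_iff_exists.1 hy
  obtain ⟨a, ha, t, rfl⟩ := exists_eq_affineGL_smul_baseSubline hd hinfty
  refine ⟨affineGL ha u • baseSubline F K, ⟨⟨⟨_, rfl⟩, ?_, ?_⟩, ?_⟩, ?_⟩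
  · exact infty_mem_affineGL_smul_baseSubline ha u
  · simp only [direction_affineGL_smul_baseSubline]
  · exact (coe_mem_affineGL_smul_baseSubline ha u u).2 (AffineSubspace.self_mem_mk' u _)
  · rintro b ⟨⟨hb, hinfty_b, hdirection⟩, hu⟩
    obtain ⟨a', ha', t', rfl⟩ := exists_eq_affineGL_smul_baseSubline hb hinfty_b
    rw [direction_affineGL_smul_baseSubline, direction_affineGL_smul_baseSubline] at hdirection
    have hmk := AffineSubspace.mk'_eq ((coe_mem_affineGL_smul_baseSubline ha' t' u).1 hu)
    rw [AffineSubspace.direction_mk'] at hmk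
    exact affineGL_smul_baseSubline_congr ha' ha (by rw [← hmk, hdirection])

end Directions

theorem existsRDS_of_algebra (F K : Type*) [Field F] [Field K] [Algebra F K] [Finite K] :
    ExistsRDS 3 (Nat.card F + 1) (Nat.card K + 1) := by
  classical
  have : Finite F := Finite.of_injective _ (algebraMap F K).injective
  have : Finite (OnePoint K) := inferInstanceAs (Finite (Option K))
  choose g hg using MulAction.exists_smul_eq (GL (Fin 2) K) (∞ : OnePoint K)
  have hparallelism (x : OnePoint K) :
      IsParallelismAt (sublines F K) x fun b => direction F ((g x)⁻¹ • b) := by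
    simpa only [hg] using
      isParallelismAt_infty.smul (fun h _ hb => smul_mem_sublines h hb) (g x)
  have card_onePoint : Nat.card (OnePoint K) = Nat.card K + 1 := Finite.card_option
  rw [← card_onePoint]
  exact existsRDS_of_isSteinerFamily isSteinerFamily_sublines
    (fun _ => ncard_of_mem_sublines) _ hparallelism

/-- For any prime power q and any positive integer n, there exists an
RDS(3, q + 1, q^n + 1). -/
theorem stmt_6 (q n : ℕ) (hq : IsPrimePow q) (hn : 0 < n) :
    ExistsRDS 3 (q + 1) (q ^ n + 1) := by
  obtain ⟨p, k, hp, hk, rfl⟩ := hq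
  have : Fact p.Prime := ⟨hp.nat_prime⟩
  have : NeZero n := ⟨hn.ne'⟩
  have h := existsRDS_of_algebra (GaloisField p k) (FiniteField.Extension (GaloisField p k) p n)
  rwa [FiniteField.natCard_extension, GaloisField.card p k hk.ne'] at h
end
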